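/- arXiv:1103.3088 — 2 statements merged into one kernel-verified Lean document; each statement's English description precedes it below -/
import Mathlib

section
/- Suppose the maximal sum of distances on S² satisfies E_{−1}(S²; N) := sup { ∑_{j≠k} |x_j − x_k| : x_1,…,x_N ∈ S² } = (4/3)·N² − (4π)^{1/2}·(√3/2)^{−1/2}·6·(−ζ(−1/2))·L_{−3}(−1/2)·N^{1/2} + o(N^{1/2}) as N → ∞, where ζ is the Riemann zeta function and L_{−3} is the analytically continued Dirichlet L-function of the nontrivial (quadratic) character mod 3. Then N^{3/4} · D_{L2,C}(S²; N) → A_2 := sqrt( (3/2) · (8π/√3)^{1/2} · (−ζ(−1/2)) · L_{−3}(−1/2) ) as N → ∞. -/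
open MeasureTheory Metric Real Filter
open scoped BigOperators ENNReal NNReal RealInnerProductSpace Topology

noncomputable section

/-- Normalized uniform (surface) probability measure `σ_d` on the unit sphere
`S^d ⊂ ℝ^{d+1}`, defined as normalized `d`-dimensional Hausdorff measure. -/
def sigmaMeasure (d : ℕ) : Measure (EuclideanSpace ℝ (Fin (d + 1))) :=
  (μH[(d : ℝ)] (sphere (0 : EuclideanSpace ℝ (Fin (d + 1))) 1))⁻¹ •
    μH[(d : ℝ)].restrict (sphere (0 : EuclideanSpace ℝ (Fin (d + 1))) 1)

/-- Squared spherical cap `L²` discrepancy of the `N`-point configuration `x` on `S^d`: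
`∫_{-1}^{1} ∫_{S^d} |#{k : x_k ∈ C(y;t)}/N − σ_d(C(y;t))|² dσ_d(y) dt`. -/
def L2DiscSq (d N : ℕ) (x : Fin N → EuclideanSpace ℝ (Fin (d + 1))) : ℝ :=
  ∫ t in Set.Icc (-1 : ℝ) 1, ∫ y,
    ((Nat.card {k : Fin N // t ≤ ⟪y, x k⟫} : ℝ) / N
      - (sigmaMeasure d {z | t ≤ ⟪y, z⟫}).toReal) ^ 2 ∂ sigmaMeasure d

/-- Spherical cap `L²` discrepancy. -/
def L2Disc (d N : ℕ) (x : Fin N → EuclideanSpace ℝ (Fin (d + 1))) : ℝ :=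
  Real.sqrt (L2DiscSq d N x)

/-- Optimal (infimal) spherical cap `L²`-discrepancy over all `N`-point configurations
on `S^d`. -/
def optL2Disc (d N : ℕ) : ℝ :=
  ⨅ x : {x : Fin N → EuclideanSpace ℝ (Fin (d + 1)) //
    ∀ k, x k ∈ sphere (0 : EuclideanSpace ℝ (Fin (d + 1))) 1}, L2Disc d N x.1

/-- The maximal sum of distances `E_{−1}(S^d; N) = sup { ∑_{j≠k} |x_j − x_k| }` over all
`N`-point configurations on `S^d`. -/
def maxSumDist (d N : ℕ) : ℝ :=
  ⨆ x : {x : Fin N → EuclideanSpace ℝ (Fin (d + 1)) //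
    ∀ k, x k ∈ sphere (0 : EuclideanSpace ℝ (Fin (d + 1))) 1},
    ∑ j, ∑ k, if j ≠ k then dist (x.1 j) (x.1 k) else 0

/-!
Stolarsky's invariance principle: for probability measures `μ`, `ν` on `S^d`, the squared `L²`
cap discrepancy between them is `κ_d (2 I(μ, ν) - I(μ, μ) - I(ν, ν))`, where `I` is the mean
distance and `κ_d = H_d(B^d) / H_d(S^d)`. Indeed, by Fubini it suffices to integrate over all caps
the indicator that `x` and `z` both lie in the cap; this is `1` plus the spherical mean of
`min ⟪y, x⟫ ⟪y, z⟫`, namely `1 - κ_d |x - z|`. Taking for `μ` an empirical measure and for `ν` the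
uniform one, whose potential is constantly `W = I(σ_d, σ_d)` on the sphere, the optimal squared
discrepancy is `κ_d (W - E_{-1}(S^d; N) / N²)`. Choosing the points greedily shows
`E_{-1}(S^d; N) ∼ W N²`, so `W` is necessarily the leading coefficient of any expansion
`E_{-1}(S^d; N) = W N² - C N^α + o(N^α)` with `α < 2`, and the second term of the expansion governs
the discrepancy.
-/

section HausdorffSphere

variable {E : Type*} [NormedAddCommGroup E] [InnerProductSpace ℝ E]

open Submodule in
lemma closedBall_subset_orthogonalProjectionOnto_image_sphere {v : E} (hv : ‖v‖ = 1) :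
    closedBall (0 : (ℝ ∙ v)ᗮ) 1 ⊆ (ℝ ∙ v)ᗮ.orthogonalProjectionOnto '' sphere 0 1 := by
  intro w hw
  have hw1 : ‖(w : E)‖ ^ 2 ≤ 1 := pow_le_one₀ (norm_nonneg _) (by simpa using hw)
  have hinner : ⟪(w : E), √(1 - ‖(w : E)‖ ^ 2) • v⟫ = 0 :=
    inner_left_of_mem_orthogonal (smul_mem _ _ (mem_span_singleton_self v)) w.2
  refine ⟨w + √(1 - ‖(w : E)‖ ^ 2) • v, ?_, ?_⟩
  · have hsq := norm_add_sq_eq_norm_sq_add_norm_sq_of_inner_eq_zero _ _ hinner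
    rw [norm_smul, hv, mul_one, norm_of_nonneg (sqrt_nonneg _), mul_self_sqrt (by linarith)] at hsq
    rw [mem_sphere_zero_iff_norm, ← sq_eq_sq₀ (norm_nonneg _) zero_le_one]
    linarith
  · rw [map_add, map_smul, orthogonalProjectionOnto_orthogonalComplement_singleton_eq_zero,
      smul_zero, add_zero, orthogonalProjectionOnto_mem_subspace_eq_self]

lemma hemisphere_subset_stereoInvFun_image {v : E} (hv : ‖v‖ = 1) :
    sphere (0 : E) 1 ∩ {x | ⟪v, x⟫ ≤ 0} ⊆ (fun w ↦ (stereoInvFun hv w : E)) '' closedBall 0 2 := by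
  rintro x ⟨hx, hvx : ⟪v, x⟫ ≤ 0⟩
  have hne : x ≠ v := by
    rintro rfl
    rw [real_inner_self_eq_norm_sq, hv] at hvx
    norm_num at hvx
  refine ⟨stereoToFun v x, ?_, congrArg Subtype.val (stereo_left_inv hv (x := ⟨x, hx⟩) hne)⟩
  have hproj : ‖(ℝ ∙ v)ᗮ.orthogonalProjectionOnto x‖ ≤ 1 :=
    (mem_sphere_zero_iff_norm.1 hx) ▸ Submodule.norm_orthogonalProjectionOnto_apply_le _ x
  have hcoeff : |2 / (1 - ⟪v, x⟫)| ≤ 2 := by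
    rw [abs_of_nonneg (div_nonneg zero_le_two (by linarith))]
    exact div_le_self zero_le_two (by linarith)
  rw [mem_closedBall_zero_iff, stereoToFun_apply, norm_smul, innerSL_apply_apply, norm_eq_abs]
  calc _ ≤ 2 * (1 : ℝ) := by gcongr
    _ = 2 := mul_one 2

variable [MeasurableSpace E] [BorelSpace E] {n : ℕ}

open Module

lemma hausdorffMeasure_sphere_pos (hE : finrank ℝ E = n + 1) :
    0 < μH[n] (sphere (0 : E) 1) := by
  have : Nontrivial E := nontrivial_of_finrank_eq_succ hE
  have : FiniteDimensional ℝ E := .of_finrank_eq_succ hE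
  have : Fact (finrank ℝ E = n + 1) := ⟨hE⟩
  obtain ⟨v, hv⟩ := exists_norm_eq E zero_le_one
  have hrank : finrank ℝ (ℝ ∙ v)ᗮ = n :=
    Submodule.finrank_orthogonal_span_singleton (by rintro rfl; simp at hv)
  calc 0 < μH[n] (closedBall (0 : (ℝ ∙ v)ᗮ) 1) := by
        rw [← hrank]; exact measure_closedBall_pos _ _ one_pos
    _ ≤ μH[n] ((ℝ ∙ v)ᗮ.orthogonalProjectionOnto '' sphere 0 1) :=
        measure_mono (closedBall_subset_orthogonalProjectionOnto_image_sphere hv)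
    _ ≤ μH[n] (sphere (0 : E) 1) :=
        hausdorffMeasure_orthogonalProjectionOnto_le _ _ _ n.cast_nonneg

lemma hausdorffMeasure_hemisphere_lt_top (hE : finrank ℝ E = n + 1) {v : E} (hv : ‖v‖ = 1) :
    μH[n] (sphere (0 : E) 1 ∩ {x | ⟪v, x⟫ ≤ 0}) < ∞ := by
  have : FiniteDimensional ℝ E := .of_finrank_eq_succ hE
  have : Fact (finrank ℝ E = n + 1) := ⟨hE⟩
  have hrank : finrank ℝ (ℝ ∙ v)ᗮ = n :=
    Submodule.finrank_orthogonal_span_singleton (by rintro rfl; simp at hv)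
  have hsmooth : ContDiff ℝ 1 fun w ↦ (stereoInvFun hv w : E) :=
    contDiff_stereoInvFunAux.comp (ℝ ∙ v)ᗮ.subtypeL.contDiff
  have hcompact := isCompact_closedBall (0 : (ℝ ∙ v)ᗮ) 2
  obtain ⟨K, hK⟩ :=
    hsmooth.locallyLipschitz.locallyLipschitzOn.exists_lipschitzOnWith_of_compact hcompact
  refine (measure_mono (hemisphere_subset_stereoInvFun_image hv)).trans_lt
    ((hK.hausdorffMeasure_image_le n.cast_nonneg).trans_lt (ENNReal.mul_lt_top (by simp) ?_))
  rw [← hrank]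
  exact hcompact.measure_lt_top

lemma hausdorffMeasure_sphere_lt_top (hE : finrank ℝ E = n + 1) :
    μH[n] (sphere (0 : E) 1) < ∞ := by
  have : Nontrivial E := nontrivial_of_finrank_eq_succ hE
  obtain ⟨v, hv⟩ := exists_norm_eq E zero_le_one
  have hcover : sphere (0 : E) 1 ⊆
      (sphere 0 1 ∩ {x | ⟪v, x⟫ ≤ 0}) ∪ (sphere 0 1 ∩ {x | ⟪-v, x⟫ ≤ 0}) := by
    intro x hx
    rcases le_total ⟪v, x⟫ 0 with h | h
    · exact .inl ⟨hx, h⟩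
    · exact .inr ⟨hx, by simpa using h⟩
  exact (measure_mono hcover).trans_lt (measure_union_lt_top
    (hausdorffMeasure_hemisphere_lt_top hE hv)
    (hausdorffMeasure_hemisphere_lt_top hE (by rwa [norm_neg])))

end HausdorffSphere

section GaussianMoments

lemma integral_norm_mul_exp_neg_norm_sq {E : Type*} [NormedAddCommGroup E] [InnerProductSpace ℝ E]
    [FiniteDimensional ℝ E] [MeasurableSpace E] [BorelSpace E] {n : ℕ}
    (hE : Module.finrank ℝ E = n + 1) :
    ∫ x : E, ‖x‖ * exp (-‖x‖ ^ 2) = √π ^ (n + 1) * Gamma (n / 2 + 1) / Gamma ((n + 1) / 2) := by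
  have : Nontrivial E := Module.nontrivial_of_finrank_eq_succ hE
  have hradial : ∫ r in Set.Ioi (0 : ℝ), r ^ n • (r * exp (-r ^ 2)) = Gamma (n / 2 + 1) / 2 := by
    have hn : (-1 : ℝ) < n + 1 := by linarith [n.cast_nonneg (α := ℝ)]
    have hGamma := integral_rpow_mul_exp_neg_rpow two_pos hn
    rw [show ((n : ℝ) + 1 + 1) / 2 = n / 2 + 1 by ring, one_div_mul_eq_div] at hGamma
    rw [← hGamma]
    refine setIntegral_congr_fun measurableSet_Ioi fun r _ ↦ ?_
    norm_cast
    rw [smul_eq_mul, pow_succ r n, mul_assoc]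
  have hball : volume.real (ball (0 : E) 1) =
      √π ^ (n + 1) / ((n + 1) / 2 * Gamma ((n + 1) / 2)) := by
    rw [measureReal_def, InnerProductSpace.volume_ball, hE, ← Gamma_add_one (by positivity)]
    push_cast
    rw [ENNReal.ofReal_one, one_pow, one_mul, ENNReal.toReal_ofReal (by positivity)]
  have : 0 < Gamma (((n : ℝ) + 1) / 2) := by positivity
  rw [integral_fun_norm_addHaar volume (fun r : ℝ ↦ r * exp (-r ^ 2)), hE, Nat.add_sub_cancel,
    hradial, hball, nsmul_eq_mul, smul_eq_mul]
  push_cast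
  field_simp

lemma integrable_norm_mul_exp_neg_norm_sq {E : Type*} [NormedAddCommGroup E]
    [InnerProductSpace ℝ E] [FiniteDimensional ℝ E] [MeasurableSpace E] [BorelSpace E] {n : ℕ}
    (hE : Module.finrank ℝ E = n + 1) :
    Integrable fun x : E ↦ ‖x‖ * exp (-‖x‖ ^ 2) := by
  refine .of_integral_ne_zero ?_
  rw [integral_norm_mul_exp_neg_norm_sq hE]
  positivity

lemma integral_abs_mul_exp_neg_sq : ∫ t : ℝ, |t| * exp (-t ^ 2) = 1 := by
  have heven := integral_comp_abs (f := fun t : ℝ ↦ t * exp (-t ^ 2))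
  have hGamma : ∫ t in Set.Ioi (0 : ℝ), t * exp (-t ^ 2) = 1 / 2 := by
    simpa [one_add_one_eq_two] using
      integral_rpow_mul_exp_neg_rpow (p := 2) (q := 1) two_pos (by norm_num)
  simpa only [sq_abs, hGamma, mul_one_div_cancel (two_ne_zero' ℝ)] using heven

lemma integral_abs_apply_zero_mul_exp_neg_norm_sq {d : ℕ} :
    ∫ x : EuclideanSpace ℝ (Fin (d + 1)), |x 0| * exp (-‖x‖ ^ 2) = √π ^ d := by
  have hgauss : ∫ t : ℝ, exp (-t ^ 2) = √π := by simpa using integral_gaussian 1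
  let f : Fin (d + 1) → ℝ → ℝ := Fin.cons (fun t ↦ |t| * exp (-t ^ 2)) fun _ t ↦ exp (-t ^ 2)
  calc ∫ x : EuclideanSpace ℝ (Fin (d + 1)), |x 0| * exp (-‖x‖ ^ 2)
      = ∫ x : Fin (d + 1) → ℝ, ∏ i, f i (x i) := by
        rw [← (EuclideanSpace.volume_preserving_symm_measurableEquiv_toLp _).integral_comp
          (MeasurableEquiv.measurableEmbedding _)]
        refine integral_congr_ae (.of_forall fun x ↦ ?_)
        simp [f, EuclideanSpace.norm_sq_eq, Fin.prod_univ_succ, Fin.sum_univ_succ, exp_add,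
          exp_sum, ← Finset.sum_neg_distrib, mul_assoc, add_comm]
    _ = √π ^ d := by
        rw [integral_fintype_prod_volume_eq_prod, Fin.prod_univ_succ]
        simp [f, integral_abs_mul_exp_neg_sq, hgauss]

end GaussianMoments

section UniformMeasure

variable {d : ℕ}

instance isProbabilityMeasure_sigmaMeasure : IsProbabilityMeasure (sigmaMeasure d) := by
  have hrank : Module.finrank ℝ (EuclideanSpace ℝ (Fin (d + 1))) = d + 1 := by simp
  refine ⟨?_⟩
  rw [sigmaMeasure, Measure.smul_apply, smul_eq_mul, Measure.restrict_apply_univ]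
  exact ENNReal.inv_mul_cancel (hausdorffMeasure_sphere_pos hrank).ne'
    (hausdorffMeasure_sphere_lt_top hrank).ne

lemma ae_sigmaMeasure_norm_eq_one : ∀ᵐ y ∂sigmaMeasure d, ‖y‖ = 1 := by
  refine Measure.ae_smul_measure ?_ _
  filter_upwards [ae_restrict_mem isClosed_sphere.measurableSet] with y hy
  exact mem_sphere_zero_iff_norm.1 hy

lemma measurePreserving_sigmaMeasure
    (e : EuclideanSpace ℝ (Fin (d + 1)) ≃ₗᵢ[ℝ] EuclideanSpace ℝ (Fin (d + 1))) :
    MeasurePreserving e (sigmaMeasure d) (sigmaMeasure d) := by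
  have h := (e.toIsometryEquiv.measurePreserving_hausdorffMeasure (d : ℝ)).restrict_preimage
    (s := sphere 0 1) isClosed_sphere.measurableSet
  rw [e.toIsometryEquiv.preimage_sphere,
    show e.toIsometryEquiv.symm 0 = 0 from map_zero e.symm] at h
  exact MeasurePreserving.smul_measure (R := ℝ≥0∞) h _

lemma integral_sigmaMeasure_comp
    (e : EuclideanSpace ℝ (Fin (d + 1)) ≃ₗᵢ[ℝ] EuclideanSpace ℝ (Fin (d + 1)))
    (f : EuclideanSpace ℝ (Fin (d + 1)) → ℝ) :
    ∫ y, f (e y) ∂sigmaMeasure d = ∫ y, f y ∂sigmaMeasure d :=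
  (measurePreserving_sigmaMeasure e).integral_comp e.toHomeomorph.measurableEmbedding f

lemma exists_linearIsometryEquiv_apply_eq {E : Type*} [NormedAddCommGroup E]
    [InnerProductSpace ℝ E] {u v : E} (h : ‖u‖ = ‖v‖) : ∃ e : E ≃ₗᵢ[ℝ] E, e u = v :=
  ⟨_, Submodule.reflection_sub h⟩

lemma integral_sigmaMeasure_inner (u : EuclideanSpace ℝ (Fin (d + 1))) :
    ∫ y, ⟪y, u⟫ ∂sigmaMeasure d = 0 := by
  have h := integral_sigmaMeasure_comp (LinearIsometryEquiv.neg ℝ) fun y ↦ ⟪y, u⟫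
  simp only [LinearIsometryEquiv.coe_neg, inner_neg_left, integral_neg] at h
  linarith

end UniformMeasure

section MeanAbsInner

variable {d : ℕ}

lemma integral_abs_inner_mul_exp_neg_norm_sq {y : EuclideanSpace ℝ (Fin (d + 1))} (hy : ‖y‖ = 1) :
    ∫ x, |⟪y, x⟫| * exp (-‖x‖ ^ 2) = √π ^ d := by
  obtain ⟨e, he⟩ := exists_linearIsometryEquiv_apply_eq
    (show ‖y‖ = ‖(EuclideanSpace.single 0 1 : EuclideanSpace ℝ (Fin (d + 1)))‖ by simp [hy])
  have hcoord (x : EuclideanSpace ℝ (Fin (d + 1))) : e x 0 = ⟪y, x⟫ := by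
    rw [← e.inner_map_map, he, EuclideanSpace.inner_single_left, map_one, one_mul]
  have h := e.measurePreserving.integral_comp e.toHomeomorph.measurableEmbedding
    fun x ↦ |x 0| * exp (-‖x‖ ^ 2)
  simpa only [hcoord, e.norm_map, integral_abs_apply_zero_mul_exp_neg_norm_sq] using h

lemma integral_sigmaMeasure_abs_inner_eq_norm_mul (u : EuclideanSpace ℝ (Fin (d + 1)))
    {v : EuclideanSpace ℝ (Fin (d + 1))} (hv : ‖v‖ = 1) :
    ∫ y, |⟪y, u⟫| ∂sigmaMeasure d = ‖u‖ * ∫ y, |⟪y, v⟫| ∂sigmaMeasure d := by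
  obtain ⟨e, he⟩ := exists_linearIsometryEquiv_apply_eq (show ‖u‖ = ‖‖u‖ • v‖ by
    simp [norm_smul, hv])
  have hrotate (y : EuclideanSpace ℝ (Fin (d + 1))) : |⟪y, u⟫| = ‖u‖ * |⟪e y, v⟫| := by
    rw [← e.inner_map_map, he, real_inner_smul_right, abs_mul, abs_norm]
  simp_rw [hrotate, integral_const_mul]
  rw [integral_sigmaMeasure_comp e fun y ↦ |⟪y, v⟫|]

/-- The constant `H_d(B^d) / H_d(S^d)` of Stolarsky's invariance principle on `S^d`, written out
with Gamma functions. -/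
def stolarskyConst (d : ℕ) : ℝ := Gamma ((d + 1) / 2) / (2 * √π * Gamma (d / 2 + 1))

lemma stolarskyConst_pos (d : ℕ) : 0 < stolarskyConst d := by
  unfold stolarskyConst
  positivity

lemma stolarskyConst_two : stolarskyConst 2 = 1 / 4 := by
  have hΓ : Gamma ((2 + 1) / 2) = √π / 2 := by
    rw [show ((2 : ℝ) + 1) / 2 = 1 / 2 + 1 by norm_num, Gamma_add_one (by norm_num),
      Gamma_one_half_eq, one_div_mul_eq_div]
  have hπ : √π ≠ 0 := by positivity
  rw [stolarskyConst, Nat.cast_ofNat, hΓ, div_self two_ne_zero, one_add_one_eq_two, Gamma_two]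
  field_simp
  norm_num

lemma integrable_abs_inner_mul_exp_neg_norm_sq :
    Integrable (fun p : EuclideanSpace ℝ (Fin (d + 1)) × EuclideanSpace ℝ (Fin (d + 1)) ↦
      |⟪p.2, p.1⟫| * exp (-‖p.1‖ ^ 2)) (volume.prod (sigmaMeasure d)) := by
  have hdom := (integrable_norm_mul_exp_neg_norm_sq
    (E := EuclideanSpace ℝ (Fin (d + 1))) finrank_euclideanSpace_fin).comp_fst (sigmaMeasure d)
  refine hdom.mono' (by fun_prop) ?_
  filter_upwards [Measure.quasiMeasurePreserving_snd.ae ae_sigmaMeasure_norm_eq_one] with p hp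
  rw [norm_of_nonneg (by positivity)]
  gcongr
  simpa [hp] using abs_real_inner_le_norm p.2 p.1

lemma integral_integral_sigmaMeasure_abs_inner_mul_exp_neg_norm_sq :
    ∫ x : EuclideanSpace ℝ (Fin (d + 1)), (∫ y, |⟪y, x⟫| * exp (-‖x‖ ^ 2) ∂sigmaMeasure d) =
      √π ^ d := by
  calc _ = ∫ y, (∫ x, |⟪y, x⟫| * exp (-‖x‖ ^ 2)) ∂sigmaMeasure d :=
        integral_integral_swap integrable_abs_inner_mul_exp_neg_norm_sq
    _ = ∫ _, √π ^ d ∂sigmaMeasure d := integral_congr_ae <|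
        ae_sigmaMeasure_norm_eq_one.mono fun _ hy ↦ integral_abs_inner_mul_exp_neg_norm_sq hy
    _ = √π ^ d := by simp

-- The Gaussian mean of `|⟪y, x⟫|` over `x` is the same for all unit vectors `y`, hence equals its
-- average over `y ∈ S^d`; there, integrating over `y` first produces the wanted integral.
lemma integral_sigmaMeasure_abs_inner_of_norm_eq_one {v : EuclideanSpace ℝ (Fin (d + 1))}
    (hv : ‖v‖ = 1) : ∫ y, |⟪y, v⟫| ∂sigmaMeasure d = 2 * stolarskyConst d := by
  set c := ∫ y, |⟪y, v⟫| ∂sigmaMeasure d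
  have hinner (x : EuclideanSpace ℝ (Fin (d + 1))) :
      ∫ y, |⟪y, x⟫| * exp (-‖x‖ ^ 2) ∂sigmaMeasure d = ‖x‖ * exp (-‖x‖ ^ 2) * c := by
    rw [integral_mul_const, integral_sigmaMeasure_abs_inner_eq_norm_mul x hv, mul_right_comm]
  have hfubini := integral_integral_sigmaMeasure_abs_inner_mul_exp_neg_norm_sq (d := d)
  simp_rw [hinner, integral_mul_const] at hfubini
  rw [integral_norm_mul_exp_neg_norm_sq finrank_euclideanSpace_fin, pow_succ, mul_assoc,
    mul_div_assoc, mul_assoc] at hfubini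
  have hπ : 0 < √π := by positivity
  have hcancel := mul_left_cancel₀ (pow_pos hπ d).ne' (hfubini.trans (mul_one _).symm)
  have hnum : 0 < Gamma (((d : ℝ) + 1) / 2) := by positivity
  have hden : 0 < Gamma ((d : ℝ) / 2 + 1) := by positivity
  rw [stolarskyConst]
  generalize Gamma (((d : ℝ) + 1) / 2) = a at hcancel hnum ⊢
  generalize Gamma ((d : ℝ) / 2 + 1) = b at hcancel hden ⊢
  field_simp at hcancel ⊢
  exact hcancel

lemma integral_sigmaMeasure_abs_inner (u : EuclideanSpace ℝ (Fin (d + 1))) :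
    ∫ y, |⟪y, u⟫| ∂sigmaMeasure d = 2 * stolarskyConst d * ‖u‖ := by
  obtain ⟨v, hv⟩ := exists_norm_eq (EuclideanSpace ℝ (Fin (d + 1))) zero_le_one
  rw [integral_sigmaMeasure_abs_inner_eq_norm_mul u hv,
    integral_sigmaMeasure_abs_inner_of_norm_eq_one hv, mul_comm]

lemma integrable_sigmaMeasure_inner (u : EuclideanSpace ℝ (Fin (d + 1))) :
    Integrable (fun y ↦ ⟪y, u⟫) (sigmaMeasure d) :=
  .of_bound (by fun_prop) ‖u‖ <| ae_sigmaMeasure_norm_eq_one.mono fun y hy ↦ by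
    simpa [hy] using norm_inner_le_norm (𝕜 := ℝ) y u

lemma integral_sigmaMeasure_min_inner (u v : EuclideanSpace ℝ (Fin (d + 1))) :
    ∫ y, min ⟪y, u⟫ ⟪y, v⟫ ∂sigmaMeasure d = -(stolarskyConst d * dist u v) := by
  have hmin (y : EuclideanSpace ℝ (Fin (d + 1))) :
      min ⟪y, u⟫ ⟪y, v⟫ = (⟪y, u⟫ + ⟪y, v⟫ - |⟪y, u - v⟫|) / 2 := by
    rw [inner_sub_right, abs_sub_comm,
      inf_eq_half_smul_add_sub_abs_sub' ℝ, smul_eq_mul, inv_mul_eq_div]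
  have hu := integrable_sigmaMeasure_inner u
  have hv := integrable_sigmaMeasure_inner v
  have huv : Integrable (fun y ↦ ⟪y, u⟫ + ⟪y, v⟫) (sigmaMeasure d) := hu.add hv
  simp_rw [hmin]
  rw [integral_div, integral_sub huv (integrable_sigmaMeasure_inner _).abs,
    integral_add hu hv, integral_sigmaMeasure_inner, integral_sigmaMeasure_inner,
    integral_sigmaMeasure_abs_inner, dist_eq_norm]
  ring

end MeanAbsInner

section SectionMeasure

variable {X Y : Type*} [MeasurableSpace X] [MeasurableSpace Y] {s : Set (X × Y)}

lemma integral_measureReal_prodMk_left (μ : Measure X) (ν : Measure Y)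
    [IsFiniteMeasure ν] (hs : MeasurableSet s) :
    ∫ x, ν.real {y | (x, y) ∈ s} ∂μ = (μ.prod ν).real s := by
  rw [measureReal_def, Measure.prod_apply hs]
  exact integral_toReal (measurable_measure_prodMk_left hs).aemeasurable
    (.of_forall fun _ ↦ measure_lt_top _ _)

lemma integral_measureReal_prodMk_right (μ : Measure X) (ν : Measure Y) [IsFiniteMeasure μ]
    [SFinite ν] (hs : MeasurableSet s) :
    ∫ y, μ.real {x | (x, y) ∈ s} ∂ν = (μ.prod ν).real s := by
  rw [measureReal_def, Measure.prod_apply_symm hs]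
  exact integral_toReal (measurable_measure_prodMk_right hs).aemeasurable
    (.of_forall fun _ ↦ measure_lt_top _ _)

end SectionMeasure

section Cap

variable {E : Type*} [NormedAddCommGroup E] [InnerProductSpace ℝ E]

/-- The half-space `{z | t ≤ ⟪y, z⟫}` for `p = (t, y)`; for `y ∈ S^d` it meets the sphere in the
spherical cap `C(y; t)`. -/
def cap (p : ℝ × E) : Set E := {z | p.1 ≤ ⟪p.2, z⟫}

variable [MeasurableSpace E] [BorelSpace E]

lemma measurableSet_cap (p : ℝ × E) : MeasurableSet (cap p) :=
  (isClosed_le continuous_const (continuous_const.inner continuous_id)).measurableSet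

variable [SecondCountableTopology E]

lemma measurableSet_mem_cap {X : Type*} [MeasurableSpace X] {f : X → ℝ × E} {g : X → E}
    (hf : Measurable f) (hg : Measurable g) : MeasurableSet {x | g x ∈ cap (f x)} :=
  measurableSet_le hf.fst (hf.snd.inner hg)

lemma measurable_measureReal_cap (μ : Measure E) [SFinite μ] :
    Measurable fun p : ℝ × E ↦ μ.real (cap p) :=
  (measurable_measure_prodMk_left
    (measurableSet_mem_cap measurable_fst measurable_snd)).ennreal_toReal

end Cap

section Stolarsky

lemma volume_real_restrict_Icc_Iic {a b c : ℝ} (hc : c ∈ Set.Icc a b) :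
    (volume.restrict (Set.Icc a b)).real (Set.Iic c) = c - a := by
  have hinter : Set.Iic c ∩ Set.Icc a b = Set.Icc a c := by
    rw [Set.inter_comm, ← Set.Ici_inter_Iic, Set.inter_assoc, Set.Iic_inter_Iic, min_eq_right hc.2,
      Set.Ici_inter_Iic]
  rw [measureReal_restrict_apply measurableSet_Iic, hinter, volume_real_Icc_of_le hc.1]

variable {d : ℕ}

/-- The measure `dt × σ_d` on the parameters `(t, y) ∈ [-1, 1] × S^d` of spherical caps, against
which the cap discrepancy is integrated. -/
def capParam (d : ℕ) : Measure (ℝ × EuclideanSpace ℝ (Fin (d + 1))) :=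
  (volume.restrict (Set.Icc (-1) 1)).prod (sigmaMeasure d)

instance isFiniteMeasure_capParam : IsFiniteMeasure (capParam d) :=
  inferInstanceAs (IsFiniteMeasure (Measure.prod _ _))

lemma capParam_real_setOf_mem_cap_and_mem_cap {x z : EuclideanSpace ℝ (Fin (d + 1))}
    (hx : ‖x‖ ≤ 1) (hz : ‖z‖ ≤ 1) :
    (capParam d).real {p | x ∈ cap p ∧ z ∈ cap p} = 1 - stolarskyConst d * dist x z := by
  have hmem {y u : EuclideanSpace ℝ (Fin (d + 1))} (hy : ‖y‖ = 1) (hu : ‖u‖ ≤ 1) :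
      ⟪y, u⟫ ∈ Set.Icc (-1) 1 := by
    rw [Set.mem_Icc, ← abs_le]
    simpa [hy] using (abs_real_inner_le_norm y u).trans (mul_le_of_le_one_right (norm_nonneg y) hu)
  have hsection : ∀ᵐ y ∂sigmaMeasure d,
      (volume.restrict (Set.Icc (-1) 1)).real {t | x ∈ cap (t, y) ∧ z ∈ cap (t, y)} =
        min ⟪y, x⟫ ⟪y, z⟫ + 1 := by
    filter_upwards [ae_sigmaMeasure_norm_eq_one] with y hy
    simp_rw [cap, Set.mem_ofPred_eq, ← le_min_iff]
    exact (volume_real_restrict_Icc_Iic (min_rec' _ (hmem hy hx) (hmem hy hz))).trans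
      (sub_neg_eq_add _ _)
  have hint : Integrable (fun y ↦ min ⟪y, x⟫ ⟪y, z⟫) (sigmaMeasure d) :=
    (integrable_sigmaMeasure_inner x).inf (integrable_sigmaMeasure_inner z)
  rw [capParam, ← integral_measureReal_prodMk_right]
  · exact (integral_congr_ae hsection).trans <| by
      rw [integral_add hint (integrable_const _), integral_sigmaMeasure_min_inner]
      simp [sub_eq_neg_add]
  · exact (measurableSet_mem_cap measurable_id measurable_const).inter
      (measurableSet_mem_cap measurable_id measurable_const)

/-- The mean distance `∫∫ |x - z| dμ(x) dν(z)` between independent samples of `μ` and `ν`. -/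
def meanDist {X : Type*} [MeasurableSpace X] [PseudoMetricSpace X] (μ ν : Measure X) : ℝ :=
  ∫ x, ∫ z, dist x z ∂ν ∂μ

lemma integrable_dist_prod {E : Type*} [NormedAddCommGroup E] [MeasurableSpace E] [BorelSpace E]
    [SecondCountableTopology E] {μ ν : Measure E} [IsFiniteMeasure μ] [IsFiniteMeasure ν] {r : ℝ}
    (hμ : ∀ᵐ x ∂μ, ‖x‖ ≤ r) (hν : ∀ᵐ z ∂ν, ‖z‖ ≤ r) :
    Integrable (fun q ↦ dist q.1 q.2) (μ.prod ν) := by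
  refine .of_bound (by fun_prop) (r + r) ?_
  filter_upwards [Measure.quasiMeasurePreserving_fst.ae hμ,
    Measure.quasiMeasurePreserving_snd.ae hν] with q hx hz
  rw [norm_of_nonneg dist_nonneg, dist_eq_norm]
  exact norm_sub_le_of_le hx hz

variable {μ ν : Measure (EuclideanSpace ℝ (Fin (d + 1)))}
  [IsProbabilityMeasure μ] [IsProbabilityMeasure ν]

lemma integral_measureReal_cap_mul (hμ : ∀ᵐ x ∂μ, ‖x‖ ≤ 1) (hν : ∀ᵐ z ∂ν, ‖z‖ ≤ 1) :
    ∫ p, μ.real (cap p) * ν.real (cap p) ∂capParam d = 1 - stolarskyConst d * meanDist μ ν := by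
  have hmeas : MeasurableSet {r : (ℝ × EuclideanSpace ℝ (Fin (d + 1))) ×
      EuclideanSpace ℝ (Fin (d + 1)) × EuclideanSpace ℝ (Fin (d + 1)) |
      r.2.1 ∈ cap r.1 ∧ r.2.2 ∈ cap r.1} :=
    (measurableSet_mem_cap measurable_fst measurable_snd.fst).inter
      (measurableSet_mem_cap measurable_fst measurable_snd.snd)
  calc ∫ p, μ.real (cap p) * ν.real (cap p) ∂capParam d
      = ∫ p, (μ.prod ν).real (cap p ×ˢ cap p) ∂capParam d := by
        simp_rw [measureReal_prod_prod]
    _ = ∫ q, (capParam d).real {p | q.1 ∈ cap p ∧ q.2 ∈ cap p} ∂μ.prod ν :=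
        (integral_measureReal_prodMk_left _ _ hmeas).trans
          (integral_measureReal_prodMk_right _ _ hmeas).symm
    _ = ∫ q, (1 - stolarskyConst d * dist q.1 q.2) ∂μ.prod ν := by
        refine integral_congr_ae ?_
        filter_upwards [Measure.quasiMeasurePreserving_fst.ae hμ,
          Measure.quasiMeasurePreserving_snd.ae hν] with q hx hz
        exact capParam_real_setOf_mem_cap_and_mem_cap hx hz
    _ = 1 - stolarskyConst d * meanDist μ ν := by
        have hint := integrable_dist_prod hμ hν
        rw [integral_sub (integrable_const _) (hint.const_mul _), integral_const_mul,
          integral_prod _ hint, meanDist]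
        simp

theorem integral_sq_measureReal_cap_sub (hμ : ∀ᵐ x ∂μ, ‖x‖ ≤ 1) (hν : ∀ᵐ z ∂ν, ‖z‖ ≤ 1) :
    ∫ p, (μ.real (cap p) - ν.real (cap p)) ^ 2 ∂capParam d =
      stolarskyConst d * (2 * meanDist μ ν - meanDist μ μ - meanDist ν ν) := by
  have hint {μ ν : Measure (EuclideanSpace ℝ (Fin (d + 1)))} [IsProbabilityMeasure μ]
      [IsProbabilityMeasure ν] :
      Integrable (fun p ↦ μ.real (cap p) * ν.real (cap p)) (capParam d) :=
    .of_bound ((measurable_measureReal_cap μ).mul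
      (measurable_measureReal_cap ν)).aestronglyMeasurable 1 <| .of_forall fun p ↦ by
        rw [norm_of_nonneg (by positivity)]
        exact mul_le_one₀ measureReal_le_one measureReal_nonneg measureReal_le_one
  have hadd : Integrable (fun p ↦ μ.real (cap p) * μ.real (cap p) +
      ν.real (cap p) * ν.real (cap p)) (capParam d) := hint.add hint
  have hexpand (p : ℝ × EuclideanSpace ℝ (Fin (d + 1))) :
      (μ.real (cap p) - ν.real (cap p)) ^ 2 = μ.real (cap p) * μ.real (cap p) +
        ν.real (cap p) * ν.real (cap p) - 2 * (μ.real (cap p) * ν.real (cap p)) := by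
    ring
  simp_rw [hexpand]
  rw [integral_sub hadd (hint.const_mul 2), integral_add hint hint, integral_const_mul,
    integral_measureReal_cap_mul hμ hμ, integral_measureReal_cap_mul hν hν,
    integral_measureReal_cap_mul hμ hν]
  ring

end Stolarsky

section EmpiricalMeasure

variable {X ι : Type*} [MeasurableSpace X] [Fintype ι]

/-- The empirical measure of a finite family of points: the uniform average of its Dirac masses.
It is the zero measure when the family is empty. -/
def empiricalMeasure (x : ι → X) : Measure X :=
  (Fintype.card ι : ℝ≥0∞)⁻¹ • ∑ k, Measure.dirac (x k)

instance isProbabilityMeasure_empiricalMeasure [Nonempty ι] (x : ι → X) :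
    IsProbabilityMeasure (empiricalMeasure x) := by
  refine ⟨?_⟩
  simp [empiricalMeasure, ENNReal.inv_mul_cancel]

lemma ae_empiricalMeasure {x : ι → X} {p : X → Prop} (hp : MeasurableSet {z | p z})
    (hx : ∀ k, p (x k)) : ∀ᵐ z ∂empiricalMeasure x, p z := by
  have hcompl : MeasurableSet {z | ¬p z} := hp.compl
  refine Measure.ae_smul_measure ?_ _
  simp [ae_iff, Measure.dirac_apply' _ hcompl, hx]

lemma integral_empiricalMeasure [MeasurableSingletonClass X] (x : ι → X) (f : X → ℝ) :
    ∫ z, f z ∂empiricalMeasure x = (∑ k, f (x k)) / Fintype.card ι := by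
  rw [empiricalMeasure, integral_smul_measure, integral_finsetSum_measure fun k _ ↦
    integrable_dirac (by simp)]
  simp [div_eq_inv_mul]

lemma empiricalMeasure_real_apply [MeasurableSingletonClass X] (x : ι → X) {s : Set X}
    (hs : MeasurableSet s) :
    (empiricalMeasure x).real s = Nat.card {k // x k ∈ s} / Fintype.card ι := by
  classical
  rw [← integral_indicator_one hs, integral_empiricalMeasure, Nat.card_eq_fintype_card,
    Fintype.card_subtype]
  simp [Set.indicator_apply]

lemma meanDist_empiricalMeasure {X : Type*} [MeasurableSpace X] [PseudoMetricSpace X]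
    [MeasurableSingletonClass X] (x : ι → X) :
    meanDist (empiricalMeasure x) (empiricalMeasure x) =
      (∑ j, ∑ k, dist (x j) (x k)) / Fintype.card ι ^ 2 := by
  simp_rw [meanDist, integral_empiricalMeasure, ← Finset.sum_div]
  rw [div_div, sq]

end EmpiricalMeasure

section Discrepancy

variable {d N : ℕ}

lemma L2DiscSq_eq_integral_capParam [NeZero N] (x : Fin N → EuclideanSpace ℝ (Fin (d + 1))) :
    L2DiscSq d N x =
      ∫ p, ((empiricalMeasure x).real (cap p) - (sigmaMeasure d).real (cap p)) ^ 2
        ∂capParam d := by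
  have hmeas : Measurable fun p ↦
      ((empiricalMeasure x).real (cap p) - (sigmaMeasure d).real (cap p)) ^ 2 :=
    ((measurable_measureReal_cap _).sub (measurable_measureReal_cap _)).pow_const 2
  have hbound (p : ℝ × EuclideanSpace ℝ (Fin (d + 1))) :
      ‖((empiricalMeasure x).real (cap p) - (sigmaMeasure d).real (cap p)) ^ 2‖ ≤ 1 := by
    rw [norm_pow, norm_eq_abs]
    exact pow_le_one₀ (abs_nonneg _) (abs_sub_le_of_nonneg_of_le measureReal_nonneg
      measureReal_le_one measureReal_nonneg measureReal_le_one)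
  rw [capParam, integral_prod _ (.of_bound hmeas.aestronglyMeasurable 1 (.of_forall hbound))]
  simp_rw [empiricalMeasure_real_apply x (measurableSet_cap _), Fintype.card_fin]
  rfl

lemma integral_dist_sigmaMeasure {x : EuclideanSpace ℝ (Fin (d + 1))} (hx : ‖x‖ = 1) :
    ∫ z, dist x z ∂sigmaMeasure d = meanDist (sigmaMeasure d) (sigmaMeasure d) := by
  have hconst : ∀ᵐ y ∂sigmaMeasure d,
      ∫ z, dist y z ∂sigmaMeasure d = ∫ z, dist x z ∂sigmaMeasure d := by
    filter_upwards [ae_sigmaMeasure_norm_eq_one] with y hy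
    obtain ⟨e, rfl⟩ := exists_linearIsometryEquiv_apply_eq (hx.trans hy.symm)
    rw [← integral_sigmaMeasure_comp e]
    simp_rw [e.dist_map]
  rw [meanDist, integral_congr_ae hconst]
  simp

theorem L2DiscSq_eq_stolarskyConst_mul [NeZero N] {x : Fin N → EuclideanSpace ℝ (Fin (d + 1))}
    (hx : ∀ k, ‖x k‖ = 1) :
    L2DiscSq d N x = stolarskyConst d * (meanDist (sigmaMeasure d) (sigmaMeasure d) -
      (∑ j, ∑ k, dist (x j) (x k)) / N ^ 2) := by
  have hcross : meanDist (empiricalMeasure x) (sigmaMeasure d) =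
      meanDist (sigmaMeasure d) (sigmaMeasure d) := by
    simp [meanDist, integral_empiricalMeasure, integral_dist_sigmaMeasure (hx _),
      mul_div_cancel_left₀, NeZero.ne N]
  rw [L2DiscSq_eq_integral_capParam, integral_sq_measureReal_cap_sub
      (ae_empiricalMeasure (isClosed_le continuous_norm continuous_const).measurableSet fun k ↦
        (hx k).le) (ae_sigmaMeasure_norm_eq_one.mono fun _ ↦ le_of_eq),
    meanDist_empiricalMeasure, hcross, Fintype.card_fin]
  ring

end Discrepancy

section OptimalDiscrepancy

lemma exists_mul_le_sum_sum_of_le_integral {X : Type*} [MeasurableSpace X] {μ : Measure X}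
    [IsProbabilityMeasure μ] {K : X → X → ℝ} {p : X → Prop} {W : ℝ}
    (hsymm : ∀ x z, K x z = K z x) (hdiag : ∀ x, 0 ≤ K x x) (hp : ∀ᵐ x ∂μ, p x)
    (hint : ∀ x, p x → Integrable (K x) μ) (hW : ∀ x, p x → W ≤ ∫ z, K x z ∂μ) (N : ℕ) :
    ∃ x : Fin N → X, (∀ k, p (x k)) ∧ W * (N * (N - 1)) ≤ ∑ j, ∑ k, K (x j) (x k) := by
  induction N with
  | zero => exact ⟨Fin.elim0, fun k ↦ k.elim0, by simp⟩
  | succ N ih =>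
    obtain ⟨x, hx, hsum⟩ := ih
    have hintx (k : Fin N) : Integrable (K (x k)) μ := hint _ (hx k)
    obtain ⟨z, hz, hle⟩ := exists_notMem_null_integral_le
      (integrable_finsetSum Finset.univ fun k _ ↦ hintx k) (ae_iff.1 hp)
    rw [integral_finsetSum _ fun k _ ↦ hintx k] at hle
    have hpot : N * W ≤ ∑ k, K (x k) z :=
      (by simpa using Finset.sum_le_sum fun k (_ : k ∈ Finset.univ) ↦ hW _ (hx k) :
        N * W ≤ ∑ k, ∫ z, K (x k) z ∂μ).trans hle
    refine ⟨Fin.cons z x, Fin.cases (by simpa using hz) hx, ?_⟩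
    simp only [Fin.sum_univ_succ, Fin.cons_zero, Fin.cons_succ, Finset.sum_add_distrib,
      hsymm z (x _)]
    push_cast
    linarith [hdiag z]

/-- `N`-point configurations on `S^d`, the index type of the extremal problems defining
`maxSumDist` and `optL2Disc`. -/
abbrev SphereConfig (d N : ℕ) :=
  {x : Fin N → EuclideanSpace ℝ (Fin (d + 1)) //
    ∀ k, x k ∈ sphere (0 : EuclideanSpace ℝ (Fin (d + 1))) 1}

variable {d N : ℕ}

instance nonempty_sphereConfig : Nonempty (SphereConfig d N) :=
  ⟨fun _ ↦ EuclideanSpace.single 0 1, by simp⟩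

lemma maxSumDist_eq_iSup :
    maxSumDist d N = ⨆ x : SphereConfig d N, ∑ j, ∑ k, dist (x.1 j) (x.1 k) := by
  refine iSup_congr fun x ↦ Finset.sum_congr rfl fun j _ ↦ Finset.sum_congr rfl fun k _ ↦ ?_
  split_ifs with h
  · rfl
  · rw [not_ne_iff.1 h, dist_self]

lemma sum_dist_le [NeZero N] (x : SphereConfig d N) :
    ∑ j, ∑ k, dist (x.1 j) (x.1 k) ≤ meanDist (sigmaMeasure d) (sigmaMeasure d) * N ^ 2 := by
  have hN : (0 : ℝ) < N := by exact_mod_cast NeZero.pos N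
  have hdisc : 0 ≤ L2DiscSq d N x.1 := integral_nonneg fun t ↦ integral_nonneg fun y ↦ sq_nonneg _
  rw [L2DiscSq_eq_stolarskyConst_mul fun k ↦ mem_sphere_zero_iff_norm.1 (x.2 k)] at hdisc
  have hsub := nonneg_of_mul_nonneg_right hdisc (stolarskyConst_pos d)
  rwa [sub_nonneg, div_le_iff₀ (by positivity)] at hsub

lemma bddAbove_range_sum_dist [NeZero N] :
    BddAbove (Set.range fun x : SphereConfig d N ↦ ∑ j, ∑ k, dist (x.1 j) (x.1 k)) :=
  ⟨_, Set.forall_mem_range.2 sum_dist_le⟩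

lemma maxSumDist_le [NeZero N] :
    maxSumDist d N ≤ meanDist (sigmaMeasure d) (sigmaMeasure d) * N ^ 2 :=
  maxSumDist_eq_iSup.trans_le (ciSup_le sum_dist_le)

lemma le_maxSumDist [NeZero N] :
    meanDist (sigmaMeasure d) (sigmaMeasure d) * (N * (N - 1)) ≤ maxSumDist d N := by
  have hint (x : EuclideanSpace ℝ (Fin (d + 1))) (hx : ‖x‖ = 1) :
      Integrable (dist x) (sigmaMeasure d) :=
    .of_bound (by fun_prop) 2 <| ae_sigmaMeasure_norm_eq_one.mono fun z hz ↦ by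
      rw [norm_of_nonneg dist_nonneg, dist_eq_norm]
      linarith [norm_sub_le x z]
  obtain ⟨x, hx, hsum⟩ := exists_mul_le_sum_sum_of_le_integral dist_comm
    (fun x ↦ (dist_self x).ge) ae_sigmaMeasure_norm_eq_one hint
    (fun x hx ↦ (integral_dist_sigmaMeasure hx).ge) N
  rw [maxSumDist_eq_iSup]
  exact hsum.trans (le_ciSup bddAbove_range_sum_dist ⟨x, fun k ↦ by simpa using hx k⟩)

lemma optL2Disc_eq_sqrt [NeZero N] :
    optL2Disc d N = √(stolarskyConst d *
      (meanDist (sigmaMeasure d) (sigmaMeasure d) - maxSumDist d N / N ^ 2)) := by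
  have hanti : Antitone fun e : ℝ ↦ √(stolarskyConst d *
      (meanDist (sigmaMeasure d) (sigmaMeasure d) - e / N ^ 2)) := fun a b hab ↦ by
    have := stolarskyConst_pos d
    dsimp only
    gcongr
  rw [maxSumDist_eq_iSup, hanti.map_ciSup_of_continuousAt (by fun_prop) bddAbove_range_sum_dist]
  refine iInf_congr fun x ↦ ?_
  rw [L2Disc, L2DiscSq_eq_stolarskyConst_mul fun k ↦ mem_sphere_zero_iff_norm.1 (x.2 k)]

lemma tendsto_maxSumDist_div_sq :
    Tendsto (fun N : ℕ ↦ maxSumDist d N / N ^ 2) atTop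
      (𝓝 (meanDist (sigmaMeasure d) (sigmaMeasure d))) := by
  have hlower : Tendsto (fun N : ℕ ↦ meanDist (sigmaMeasure d) (sigmaMeasure d) * (1 - (N : ℝ)⁻¹))
      atTop (𝓝 (meanDist (sigmaMeasure d) (sigmaMeasure d))) := by
    simpa using (tendsto_inv_atTop_nhds_zero_nat.const_sub 1).const_mul
      (meanDist (sigmaMeasure d) (sigmaMeasure d))
  refine tendsto_of_tendsto_of_tendsto_of_le_of_le' hlower tendsto_const_nhds ?_ ?_
  all_goals
    filter_upwards [eventually_gt_atTop 0] with N hN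
    have : NeZero N := ⟨hN.ne'⟩
  · rw [le_div_iff₀ (by positivity)]
    calc meanDist (sigmaMeasure d) (sigmaMeasure d) * (1 - (N : ℝ)⁻¹) * N ^ 2
        = meanDist (sigmaMeasure d) (sigmaMeasure d) * (N * (N - 1)) := by field_simp
      _ ≤ maxSumDist d N := le_maxSumDist
  · rw [div_le_iff₀ (by positivity)]
    exact maxSumDist_le

end OptimalDiscrepancy

section Asymptotics

variable {E : ℕ → ℝ} {W C α : ℝ}

lemma tendsto_rpow_mul_sub_div_sq_of_isLittleO
    (hE : (fun N : ℕ ↦ E N - (W * (N : ℝ) ^ 2 - C * (N : ℝ) ^ α)) =o[atTop]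
      fun N : ℕ ↦ (N : ℝ) ^ α) :
    Tendsto (fun N : ℕ ↦ (N : ℝ) ^ (2 - α) * (W - E N / N ^ 2)) atTop (𝓝 C) := by
  have hlim := hE.tendsto_div_nhds_zero.const_sub C
  rw [sub_zero] at hlim
  refine hlim.congr' ?_
  filter_upwards [eventually_gt_atTop 0] with N hN
  have hN' : (0 : ℝ) < N := by exact_mod_cast hN
  rw [rpow_sub hN', rpow_two]
  field_simp
  ring

lemma tendsto_div_sq_of_tendsto_rpow_mul_sub (hα : α < 2)
    (hlim : Tendsto (fun N : ℕ ↦ (N : ℝ) ^ (2 - α) * (W - E N / N ^ 2)) atTop (𝓝 C)) :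
    Tendsto (fun N : ℕ ↦ E N / N ^ 2) atTop (𝓝 W) := by
  have hpow := (tendsto_rpow_neg_atTop (sub_pos.2 hα)).comp tendsto_natCast_atTop_atTop
  have hsub := (hpow.mul hlim).const_sub W
  rw [zero_mul, sub_zero] at hsub
  refine hsub.congr' ?_
  filter_upwards [eventually_gt_atTop 0] with N hN
  have hN' : (0 : ℝ) < N := by exact_mod_cast hN
  rw [Function.comp_apply, rpow_neg hN'.le, inv_mul_cancel_left₀ (rpow_pos_of_pos hN' _).ne',
    sub_sub_cancel]

end Asymptotics

theorem optL2Disc_S2_tendsto_of_energy_asymptotics_general (d : ℕ) {W C α : ℝ} (hα : α < 2)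
    (hE : (fun N : ℕ ↦ maxSumDist d N - (W * (N : ℝ) ^ 2 - C * (N : ℝ) ^ α)) =o[atTop]
      fun N : ℕ ↦ (N : ℝ) ^ α) :
    Tendsto (fun N : ℕ ↦ (N : ℝ) ^ (1 - α / 2) * optL2Disc d N) atTop
      (𝓝 √(stolarskyConst d * C)) := by
  have hdefect := tendsto_rpow_mul_sub_div_sq_of_isLittleO hE
  have hW : W = meanDist (sigmaMeasure d) (sigmaMeasure d) :=
    tendsto_nhds_unique (tendsto_div_sq_of_tendsto_rpow_mul_sub hα hdefect)
      tendsto_maxSumDist_div_sq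
  refine (hdefect.const_mul (stolarskyConst d)).sqrt.congr' ?_
  filter_upwards [eventually_gt_atTop 0] with N hN
  have : NeZero N := ⟨hN.ne'⟩
  have hsqrt : (N : ℝ) ^ (1 - α / 2) = √((N : ℝ) ^ (2 - α)) := by
    rw [sqrt_eq_rpow, ← rpow_mul N.cast_nonneg]
    ring_nf
  rw [optL2Disc_eq_sqrt, hsqrt, ← sqrt_mul (by positivity), ← hW, mul_left_comm]

lemma four_pi_rpow_mul_sqrt_three_div_two_rpow :
    (4 * π) ^ ((1 : ℝ) / 2) * (√3 / 2) ^ (-(1 : ℝ) / 2) = (8 * π / √3) ^ ((1 : ℝ) / 2) := by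
  rw [neg_div, rpow_neg (by positivity), ← inv_rpow (by positivity),
    ← mul_rpow (by positivity) (by positivity)]
  congr 1
  field_simp
  norm_num

/-- If the maximal sum of distances on `S²` satisfies
`E_{−1}(S²;N) = (4/3)N² − (4π)^{1/2} (√3/2)^{−1/2} 6 (−ζ(−1/2)) L_{−3}(−1/2) N^{1/2} + o(N^{1/2})`,
then `N^{3/4} · D_{L2,C}(S²;N) → A₂ = sqrt((3/2)(8π/√3)^{1/2}(−ζ(−1/2)) L_{−3}(−1/2))`.
Here `ζ` is the Riemann zeta function and `L_{−3}` is the (analytically continued)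
Dirichlet L-function of the nontrivial character mod 3; `zval` and `lval` are their
(real) values at `−1/2`. -/
theorem optL2Disc_S2_tendsto_of_energy_asymptotics
    (χ : DirichletCharacter ℂ 3) (hχ : χ ≠ 1) (zval lval : ℝ)
    (hz : (zval : ℂ) = riemannZeta (-1 / 2 : ℂ))
    (hl : (lval : ℂ) = DirichletCharacter.LFunction χ (-1 / 2 : ℂ))
    (hE : (fun N : ℕ => maxSumDist 2 N -
        ((4 / 3) * (N : ℝ) ^ 2 -
          (4 * π) ^ ((1 : ℝ) / 2) * (Real.sqrt 3 / 2) ^ (-(1 : ℝ) / 2) * 6 * (-zval) * lval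
            * (N : ℝ) ^ ((1 : ℝ) / 2)))
        =o[atTop] fun N : ℕ => (N : ℝ) ^ ((1 : ℝ) / 2)) :
    Tendsto (fun N : ℕ => (N : ℝ) ^ ((3 : ℝ) / 4) * optL2Disc 2 N) atTop
      (𝓝 (Real.sqrt ((3 / 2) * (8 * π / Real.sqrt 3) ^ ((1 : ℝ) / 2) * (-zval) * lval))) := by
  have h := optL2Disc_S2_tendsto_of_energy_asymptotics_general 2 (by norm_num) hE
  rw [four_pi_rpow_mul_sqrt_three_div_two_rpow, stolarskyConst_two] at h
  convert h using 3
  · norm_num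
  · ring_nf
end
end

section
/- Boundary case s = d of the minimal Riesz energy on the sphere: for d ≥ 2, the minimal Riesz d-energy E_d(S^d; N) := inf { ∑_{j≠k} |x_j − x_k|^{−d} : x_1,…,x_N ∈ S^d } satisfies E_d(S^d; N) / (N² log N) → H_d(B^d)/H_d(S^d) = (1/d) · Γ((d+1)/2) / ( √π · Γ(d/2) ) as N → ∞. -/
open MeasureTheory Metric Real Filter
open scoped BigOperators ENNReal NNReal RealInnerProductSpace Topology

noncomputable section

/-- The minimal Riesz `s`-energy `E_s(S^d; N) = inf { ∑_{j≠k} |x_j − x_k|^{−s} }` over all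
`N`-point configurations on `S^d` (with value `∞` for a pair of coincident points). -/
def minRieszEnergy (s : ℝ) (d N : ℕ) : ℝ≥0∞ :=
  ⨅ x : {x : Fin N → EuclideanSpace ℝ (Fin (d + 1)) //
    ∀ k, x k ∈ sphere (0 : EuclideanSpace ℝ (Fin (d + 1))) 1},
    ∑ j, ∑ k, if j ≠ k then edist (x.1 j) (x.1 k) ^ (-s) else 0

/-!
Let `σ` be the normalised Hausdorff measure of the sphere and `κ` its density
`lim σ (B(e, r)) / r ^ d`. By the layer-cake formula the potential of the kernel `ρ ^ (-d)`, cut off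
at `ρ = T ^ (-1 / d)`, is asymptotic to `κ log T`.

Lower bound: on the sphere `|x - y| ^ 2 = 2 - 2 ⟪x, y⟫`, so the smoothed kernel
`(|x - y| ^ 2 + ε ^ 2) ^ (-d / 2)` is a power series in `⟪x, y⟫` with nonnegative coefficients.
It is therefore positive definite and its energy, diagonal included, is at least `N ^ 2` times its
constant potential. Upper bound: add points one at a time; averaging the potential of the earlier
points over the complement of small balls around them produces a next point at which that potential
is at most its mean, up to a factor tending to `1`.

To find `κ`, note that any two isometry-invariant measures `μ`, `τ` on the sphere satisfy
`μ (B(e, r)) τ (S) = τ (B(e, r)) μ (S)`, by evaluating `μ × τ` on `{|x - y| ≤ r}` in two ways.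
Near a pole the sphere is almost isometric to its tangent space, so Hausdorff measure there has the
density `H_d (B^d)`. The surface measure, given by volumes of cones, has density `vol (B^d)` and
total mass `(d + 1) vol (B^(d + 1))`, and comparing the two yields the Gamma quotient.
-/

section LogAsymptotics

lemma tendsto_log_log_div_log_atTop :
    Tendsto (fun x : ℝ => Real.log (Real.log x) / Real.log x) atTop (𝓝 0) :=
  (Real.isLittleO_log_id_atTop.comp_tendsto tendsto_log_atTop).tendsto_div_nhds_zero

lemma tendsto_log_mul_log_div_log_atTop :
    Tendsto (fun x : ℝ => Real.log (x * Real.log x) / Real.log x) atTop (𝓝 1) := by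
  have h := tendsto_log_log_div_log_atTop.const_add 1
  rw [add_zero] at h
  refine h.congr' ?_
  filter_upwards [eventually_gt_atTop 0, tendsto_log_atTop.eventually_gt_atTop 0] with x hx hlog
  rw [Real.log_mul hx.ne' hlog.ne', add_div, div_self hlog.ne']

lemma tendsto_log_div_log_div_log_atTop :
    Tendsto (fun x : ℝ => Real.log (x / Real.log x) / Real.log x) atTop (𝓝 1) := by
  have h := tendsto_log_log_div_log_atTop.const_sub 1
  rw [sub_zero] at h
  refine h.congr' ?_
  filter_upwards [eventually_gt_atTop 0, tendsto_log_atTop.eventually_gt_atTop 0] with x hx hlog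
  rw [Real.log_div hx.ne' hlog.ne', sub_div, div_self hlog.ne']

lemma tendsto_mul_log_atTop : Tendsto (fun x : ℝ => x * Real.log x) atTop atTop :=
  tendsto_id.atTop_mul_atTop₀ tendsto_log_atTop

lemma tendsto_div_log_atTop : Tendsto (fun x : ℝ => x / Real.log x) atTop atTop := by
  have h : Tendsto (fun x : ℝ => Real.log x / x) atTop (𝓝[>] 0) := by
    refine tendsto_nhdsWithin_iff.2
      ⟨Real.isLittleO_log_id_atTop.tendsto_div_nhds_zero, ?_⟩
    filter_upwards [eventually_gt_atTop 0, tendsto_log_atTop.eventually_gt_atTop 0]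
      with x hx hlog using div_pos hlog hx
  exact h.inv_tendsto_nhdsGT_zero.congr fun x => inv_div _ _

lemma isLittleO_intervalIntegral_log {f : ℝ → ℝ} {a : ℝ}
    (hf : ∀ b, a ≤ b → IntervalIntegrable f volume a b) (ho : f =o[atTop] fun t => t⁻¹) :
    (fun T => ∫ t in a..T, f t) =o[atTop] Real.log := by
  refine Asymptotics.isLittleO_iff.2 fun δ hδ => ?_
  obtain ⟨b, hb1, hab, hb⟩ : ∃ b, 1 ≤ b ∧ a ≤ b ∧ ∀ t, b ≤ t → ‖f t‖ ≤ δ / 2 * ‖t⁻¹‖ :=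
    ((eventually_ge_atTop 1).and ((eventually_ge_atTop a).and
      (eventually_forall_ge_atTop.2 (Asymptotics.isLittleO_iff.1 ho (half_pos hδ))))).exists
  have hb0 : 0 < b := one_pos.trans_le hb1
  filter_upwards [eventually_ge_atTop b,
    tendsto_log_atTop.eventually_ge_atTop (‖∫ t in a..b, f t‖ / (δ / 2))] with T hT hlog
  have hT0 : 0 < T := hb0.trans_le hT
  have hhead : ‖∫ t in a..b, f t‖ ≤ δ / 2 * Real.log T := by
    rwa [div_le_iff₀' (half_pos hδ)] at hlog
  have htail : ‖∫ t in b..T, f t‖ ≤ δ / 2 * Real.log T := by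
    calc ‖∫ t in b..T, f t‖ ≤ ∫ t in b..T, δ / 2 * t⁻¹ := by
          refine intervalIntegral.norm_integral_le_of_norm_le hT (ae_of_all _ fun t ht => ?_) ?_
          · simpa only [Real.norm_of_nonneg (inv_nonneg.2 (hb0.trans ht.1).le)] using hb t ht.1.le
          · exact (intervalIntegrable_inv_iff.2
              (Or.inr (Set.notMem_uIcc_of_lt hb0 hT0))).const_mul _
      _ = δ / 2 * (Real.log T - Real.log b) := by
          rw [intervalIntegral.integral_const_mul, integral_inv_of_pos hb0 hT0,
            Real.log_div hT0.ne' hb0.ne']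
      _ ≤ δ / 2 * Real.log T := by
          gcongr
          linarith [Real.log_nonneg hb1]
  calc ‖∫ t in a..T, f t‖ = ‖(∫ t in a..b, f t) + ∫ t in b..T, f t‖ := by
        rw [intervalIntegral.integral_add_adjacent_intervals (hf b hab)
          ((hf b hab).symm.trans (hf T (hab.trans hT)))]
    _ ≤ δ / 2 * Real.log T + δ / 2 * Real.log T := (norm_add_le _ _).trans (add_le_add hhead htail)
    _ = δ * ‖Real.log T‖ := by
        rw [Real.norm_of_nonneg (Real.log_nonneg (hb1.trans hT))]
        ring

lemma tendsto_intervalIntegral_div_log {g : ℝ → ℝ} {κ : ℝ}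
    (hg : ∀ a b, IntervalIntegrable g volume a b)
    (hlim : Tendsto (fun t => t * g t) atTop (𝓝 κ)) :
    Tendsto (fun T => (∫ t in (0 : ℝ)..T, g t) / Real.log T) atTop (𝓝 κ) := by
  have hinv : ∀ T : ℝ, 1 ≤ T → IntervalIntegrable (fun t => κ * t⁻¹) volume 1 T := fun T hT =>
    (intervalIntegrable_inv_iff.2
      (Or.inr (Set.notMem_uIcc_of_lt one_pos (one_pos.trans_le hT)))).const_mul κ
  have ho : (fun t => g t - κ * t⁻¹) =o[atTop] fun t => t⁻¹ := by
    refine Asymptotics.isLittleO_of_tendsto' ?_ ?_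
    · filter_upwards [eventually_gt_atTop 0] with t ht h0 using absurd h0 (inv_ne_zero ht.ne')
    · have h := hlim.sub_const κ
      rw [sub_self] at h
      refine h.congr' ?_
      filter_upwards [eventually_gt_atTop 0] with t ht
      field_simp
  have hrem := (isLittleO_intervalIntegral_log (fun T hT => (hg 1 T).sub (hinv T hT))
    ho).tendsto_div_nhds_zero
  have hconst : Tendsto (fun T => (∫ t in (0 : ℝ)..1, g t) / Real.log T) atTop (𝓝 0) :=
    tendsto_log_atTop.const_div_atTop _
  have hsum := (hconst.add hrem).add_const κ
  rw [zero_add, zero_add] at hsum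
  refine hsum.congr' ?_
  filter_upwards [eventually_ge_atTop 1, tendsto_log_atTop.eventually_gt_atTop 0] with T hT hlog
  rw [← intervalIntegral.integral_add_adjacent_intervals (hg 0 1) (hg 1 T),
    intervalIntegral.integral_sub (hg 1 T) (hinv T hT), intervalIntegral.integral_const_mul,
    integral_inv_of_pos one_pos (one_pos.trans_le hT), div_one]
  field_simp
  ring

end LogAsymptotics

section Kernels

/-- The Riesz kernel `ρ ^ (-s)` of the distance `ρ`, cut off at the scale `ε`. -/
def truncatedRiesz (s ε ρ : ℝ) : ℝ := (max ρ ε) ^ (-s)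

/-- The Riesz kernel `ρ ^ (-s)` of the distance `ρ`, smoothed at the scale `ε` so that it becomes
positive definite on spheres. -/
def smoothedRiesz (s ε ρ : ℝ) : ℝ := (ρ ^ 2 + ε ^ 2) ^ (-(s / 2))

variable {s ε ρ : ℝ}

lemma truncatedRiesz_of_le (h : ε ≤ ρ) : truncatedRiesz s ε ρ = ρ ^ (-s) := by
  rw [truncatedRiesz, max_eq_left h]

lemma truncatedRiesz_pos (hε : 0 < ε) : 0 < truncatedRiesz s ε ρ :=
  Real.rpow_pos_of_pos (lt_max_of_lt_right hε) _

lemma truncatedRiesz_le (hs : 0 ≤ s) (hε : 0 < ε) : truncatedRiesz s ε ρ ≤ ε ^ (-s) :=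
  Real.rpow_le_rpow_of_nonpos hε (le_max_right _ _) (neg_nonpos.2 hs)

lemma continuous_truncatedRiesz (hε : 0 < ε) : Continuous (truncatedRiesz s ε) :=
  (continuous_id.max continuous_const).rpow_const fun _ => Or.inl (lt_max_of_lt_right hε).ne'

lemma le_truncatedRiesz_iff (hs : 0 < s) (hε : 0 < ε) (hρ : 0 ≤ ρ) {t : ℝ} (ht : 0 ≤ t)
    (htε : t ≤ ε ^ (-s)) : t ≤ truncatedRiesz s ε ρ ↔ t * ρ ^ s ≤ 1 := by
  have hinv : ∀ a : ℝ, 0 < a → (t ≤ a ^ (-s) ↔ t * a ^ s ≤ 1) := fun a ha => by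
    rw [Real.rpow_neg ha.le, ← one_div, le_div_iff₀ (Real.rpow_pos_of_pos ha s)]
  have hmax : (max ρ ε) ^ s = max (ρ ^ s) (ε ^ s) :=
    (Real.monotoneOn_rpow_Ici_of_exponent_nonneg hs.le).map_max hρ hε.le
  rw [truncatedRiesz, hinv _ (lt_max_of_lt_right hε), hmax, mul_max_of_nonneg _ _ ht, max_le_iff,
    and_iff_left ((hinv ε hε).1 htε)]

lemma smoothedRiesz_nonneg : 0 ≤ smoothedRiesz s ε ρ :=
  Real.rpow_nonneg (by positivity) _

lemma continuous_smoothedRiesz (hε : 0 < ε) : Continuous (smoothedRiesz s ε) :=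
  ((continuous_id.pow 2).add continuous_const).rpow_const fun ρ =>
    Or.inl (add_pos_of_nonneg_of_pos (sq_nonneg ρ) (pow_pos hε 2)).ne'

lemma rpow_sq_neg_half {a : ℝ} (ha : 0 ≤ a) : (a ^ 2) ^ (-(s / 2)) = a ^ (-s) := by
  rw [← Real.rpow_natCast_mul ha]
  congr 1
  push_cast
  ring

lemma smoothedRiesz_zero (hε : 0 ≤ ε) : smoothedRiesz s ε 0 = ε ^ (-s) := by
  rw [smoothedRiesz, zero_pow two_ne_zero, zero_add, rpow_sq_neg_half hε]

lemma smoothedRiesz_le_rpow (hs : 0 ≤ s) (hρ : 0 < ρ) : smoothedRiesz s ε ρ ≤ ρ ^ (-s) := by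
  rw [← rpow_sq_neg_half hρ.le]
  exact Real.rpow_le_rpow_of_nonpos (pow_pos hρ 2) (le_add_of_nonneg_right (sq_nonneg ε))
    (by linarith)

lemma smoothedRiesz_le_truncatedRiesz (hs : 0 ≤ s) (hε : 0 < ε) :
    smoothedRiesz s ε ρ ≤ truncatedRiesz s ε ρ := by
  rw [truncatedRiesz, ← rpow_sq_neg_half (hε.le.trans (le_max_right ρ ε))]
  refine Real.rpow_le_rpow_of_nonpos (pow_pos (lt_max_of_lt_right hε) 2) ?_ (by linarith)
  rcases le_total ρ ε with h | h
  · rw [max_eq_right h]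
    exact le_add_of_nonneg_left (sq_nonneg ρ)
  · rw [max_eq_left h]
    exact le_add_of_nonneg_right (sq_nonneg ε)

lemma mul_truncatedRiesz_le_smoothedRiesz (hs : 0 ≤ s) (hε : 0 < ε) (hρ : 0 ≤ ρ) {ε' : ℝ}
    (hε' : 0 < ε') :
    (1 + (ε / ε') ^ 2) ^ (-(s / 2)) * truncatedRiesz s ε' ρ ≤ smoothedRiesz s ε ρ := by
  have hm : 0 < max ρ ε' := lt_max_of_lt_right hε'
  rw [truncatedRiesz, ← rpow_sq_neg_half hm.le,
    ← Real.mul_rpow (by positivity) (sq_nonneg _)]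
  refine Real.rpow_le_rpow_of_nonpos (by positivity) ?_ (by linarith)
  calc ρ ^ 2 + ε ^ 2 = ρ ^ 2 + (ε / ε') ^ 2 * ε' ^ 2 := by field_simp
    _ ≤ (max ρ ε') ^ 2 + (ε / ε') ^ 2 * (max ρ ε') ^ 2 := by
        gcongr
        exacts [le_max_left _ _, le_max_right _ _]
    _ = (1 + (ε / ε') ^ 2) * (max ρ ε') ^ 2 := by ring

end Kernels

section KernelIntegrals

variable {X : Type*} [PseudoMetricSpace X] [MeasurableSpace X] {σ : Measure X} {e : X} {s ε κ : ℝ}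

lemma tendsto_mul_measureReal_dist_rpow_le (hs : 0 < s)
    (hlim : Tendsto (fun r : ℝ => σ.real (closedBall e r) / r ^ s) (𝓝[>] 0) (𝓝 κ)) :
    Tendsto (fun t : ℝ => t * σ.real {y | t * dist e y ^ s ≤ 1}) atTop (𝓝 κ) := by
  have hr : Tendsto (fun t : ℝ => t ^ (-s⁻¹)) atTop (𝓝[>] 0) :=
    tendsto_nhdsWithin_iff.2 ⟨tendsto_rpow_neg_atTop (inv_pos.2 hs),
      (eventually_gt_atTop 0).mono fun t ht => Real.rpow_pos_of_pos ht _⟩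
  refine (hlim.comp hr).congr' ?_
  filter_upwards [eventually_gt_atTop 0] with t ht
  have hball : closedBall e (t ^ (-s⁻¹)) = {y | t * dist e y ^ s ≤ 1} := by
    ext y
    rw [mem_closedBall', Set.mem_ofPred_eq, Real.rpow_neg ht.le, ← Real.inv_rpow ht.le,
      Real.le_rpow_inv_iff_of_pos dist_nonneg (inv_nonneg.2 ht.le) hs, ← one_div,
      le_div_iff₀' ht]
  have hpow : (t ^ (-s⁻¹)) ^ s = t⁻¹ := by
    rw [← Real.rpow_mul ht.le, neg_mul, inv_mul_cancel₀ hs.ne', Real.rpow_neg_one]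
  rw [Function.comp_apply, hball, hpow, div_inv_eq_mul, mul_comm]

lemma tendsto_mul_measureReal_closedBall_mul_log_rpow (hs : 0 < s)
    (hlim : Tendsto (fun r : ℝ => σ.real (closedBall e r) / r ^ s) (𝓝[>] 0) (𝓝 κ)) :
    Tendsto (fun T : ℝ => T * σ.real (closedBall e ((T * Real.log T) ^ (-s⁻¹)))) atTop (𝓝 0) := by
  have hr : Tendsto (fun T : ℝ => (T * Real.log T) ^ (-s⁻¹)) atTop (𝓝[>] 0) := by
    refine tendsto_nhdsWithin_iff.2
      ⟨(tendsto_rpow_neg_atTop (inv_pos.2 hs)).comp tendsto_mul_log_atTop, ?_⟩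
    filter_upwards [tendsto_mul_log_atTop.eventually_gt_atTop 0] with T hT
      using Real.rpow_pos_of_pos hT _
  have h := (hlim.comp hr).mul tendsto_log_atTop.inv_tendsto_atTop
  rw [mul_zero] at h
  refine h.congr' ?_
  filter_upwards [eventually_gt_atTop 0, tendsto_log_atTop.eventually_gt_atTop 0] with T hT hlog
  have hpow : ((T * Real.log T) ^ (-s⁻¹)) ^ s = (T * Real.log T)⁻¹ := by
    rw [← Real.rpow_mul (by positivity), neg_mul, inv_mul_cancel₀ hs.ne', Real.rpow_neg_one]
  rw [Function.comp_apply, hpow, Pi.inv_apply]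
  field_simp

variable [OpensMeasurableSpace X] [IsFiniteMeasure σ]

lemma integrable_truncatedRiesz_dist (hs : 0 ≤ s) (hε : 0 < ε) :
    Integrable (fun y => truncatedRiesz s ε (dist e y)) σ := by
  refine Integrable.of_bound (C := ε ^ (-s))
    ((continuous_truncatedRiesz hε).comp (by fun_prop)).aestronglyMeasurable
    (ae_of_all _ fun y => ?_)
  rw [Real.norm_of_nonneg (truncatedRiesz_pos hε).le]
  exact truncatedRiesz_le hs hε

lemma integrable_smoothedRiesz_dist (hs : 0 ≤ s) (hε : 0 < ε) :
    Integrable (fun y => smoothedRiesz s ε (dist e y)) σ := by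
  refine (integrable_truncatedRiesz_dist (e := e) hs hε).mono'
    ((continuous_smoothedRiesz hε).comp (by fun_prop)).aestronglyMeasurable
    (ae_of_all _ fun y => ?_)
  rw [Real.norm_of_nonneg smoothedRiesz_nonneg]
  exact smoothedRiesz_le_truncatedRiesz hs hε

lemma integral_truncatedRiesz_dist (hs : 0 < s) (hε : 0 < ε) :
    ∫ y, truncatedRiesz s ε (dist e y) ∂σ
      = ∫ t in (0 : ℝ)..ε ^ (-s), σ.real {y | t * dist e y ^ s ≤ 1} := by
  rw [(integrable_truncatedRiesz_dist hs.le hε).integral_eq_integral_Ioc_meas_le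
      (ae_of_all _ fun y => (truncatedRiesz_pos hε).le)
      (ae_of_all _ fun y => truncatedRiesz_le hs.le hε),
    intervalIntegral.integral_of_le (Real.rpow_nonneg hε.le _)]
  refine setIntegral_congr_fun measurableSet_Ioc fun t ht => ?_
  simp only [le_truncatedRiesz_iff hs hε dist_nonneg ht.1.le ht.2]

lemma tendsto_integral_truncatedRiesz_div_log (hs : 0 < s)
    (hlim : Tendsto (fun r : ℝ => σ.real (closedBall e r) / r ^ s) (𝓝[>] 0) (𝓝 κ)) :
    Tendsto (fun T : ℝ =>
      (∫ y, truncatedRiesz s (T ^ (-s⁻¹)) (dist e y) ∂σ) / Real.log T) atTop (𝓝 κ) := by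
  have hanti : Antitone fun t : ℝ => σ.real {y | t * dist e y ^ s ≤ 1} := fun a b hab =>
    measureReal_mono fun y hy =>
      (mul_le_mul_of_nonneg_right hab (Real.rpow_nonneg dist_nonneg s)).trans hy
  refine (tendsto_intervalIntegral_div_log (fun a b => hanti.intervalIntegrable)
    (tendsto_mul_measureReal_dist_rpow_le hs hlim)).congr' ?_
  filter_upwards [eventually_gt_atTop 0] with T hT
  rw [integral_truncatedRiesz_dist hs (Real.rpow_pos_of_pos hT _), ← Real.rpow_mul hT.le,
    neg_mul_neg, inv_mul_cancel₀ hs.ne', Real.rpow_one]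

lemma tendsto_integral_truncatedRiesz_mul_log_div_log (hs : 0 < s)
    (hlim : Tendsto (fun r : ℝ => σ.real (closedBall e r) / r ^ s) (𝓝[>] 0) (𝓝 κ)) :
    Tendsto (fun T : ℝ =>
      (∫ y, truncatedRiesz s ((T * Real.log T) ^ (-s⁻¹)) (dist e y) ∂σ) / Real.log T)
      atTop (𝓝 κ) := by
  have h := ((tendsto_integral_truncatedRiesz_div_log hs hlim).comp tendsto_mul_log_atTop).mul
    tendsto_log_mul_log_div_log_atTop
  rw [mul_one] at h
  refine h.congr' ?_
  filter_upwards [(tendsto_log_atTop.comp tendsto_mul_log_atTop).eventually_gt_atTop 0]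
    with T hlog
  exact div_mul_div_cancel₀ hlog.ne'

lemma tendsto_integral_smoothedRiesz_div_log (hs : 0 < s)
    (hlim : Tendsto (fun r : ℝ => σ.real (closedBall e r) / r ^ s) (𝓝[>] 0) (𝓝 κ)) :
    Tendsto (fun T : ℝ =>
      (∫ y, smoothedRiesz s (T ^ (-s⁻¹)) (dist e y) ∂σ) / Real.log T) atTop (𝓝 κ) := by
  have hupper := tendsto_integral_truncatedRiesz_div_log hs hlim
  have hlower : Tendsto (fun T : ℝ => (1 + (Real.log T ^ (-s⁻¹)) ^ 2) ^ (-(s / 2)) *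
      ((∫ y, truncatedRiesz s ((T / Real.log T) ^ (-s⁻¹)) (dist e y) ∂σ)
        / Real.log (T / Real.log T) * (Real.log (T / Real.log T) / Real.log T)))
      atTop (𝓝 κ) := by
    have hfactor : Tendsto (fun T : ℝ => (1 + (Real.log T ^ (-s⁻¹)) ^ 2) ^ (-(s / 2))) atTop
        (𝓝 1) := by
      have h := ((tendsto_rpow_neg_atTop (inv_pos.2 hs)).comp tendsto_log_atTop).pow 2
      have h1 := (h.const_add 1).rpow_const (p := -(s / 2)) (Or.inl (by norm_num))
      simpa using h1
    have h := hfactor.mul ((hupper.comp tendsto_div_log_atTop).mul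
      tendsto_log_div_log_div_log_atTop)
    simpa only [one_mul, mul_one, Function.comp_def] using h
  refine tendsto_of_tendsto_of_tendsto_of_le_of_le' hlower hupper ?_ ?_
  · filter_upwards [eventually_gt_atTop 0, tendsto_log_atTop.eventually_gt_atTop 0,
      (tendsto_log_atTop.comp tendsto_div_log_atTop).eventually_gt_atTop 0] with T hT hlog hlog'
    rw [Function.comp_apply] at hlog'
    have hT' : 0 < T / Real.log T := div_pos hT hlog
    have hε : 0 < T ^ (-s⁻¹) := Real.rpow_pos_of_pos hT _
    have hε' : 0 < (T / Real.log T) ^ (-s⁻¹) := Real.rpow_pos_of_pos hT' _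
    have hratio : T ^ (-s⁻¹) / (T / Real.log T) ^ (-s⁻¹) = Real.log T ^ (-s⁻¹) := by
      rw [← Real.div_rpow hT.le hT'.le, div_div_cancel₀ hT.ne']
    rw [div_mul_div_cancel₀ hlog'.ne', ← mul_div_assoc, ← integral_const_mul, ← hratio]
    gcongr
    exacts [(integrable_truncatedRiesz_dist hs.le hε').const_mul _,
      integrable_smoothedRiesz_dist hs.le hε,
      fun y => mul_truncatedRiesz_le_smoothedRiesz hs.le hε dist_nonneg hε']
  · filter_upwards [eventually_gt_atTop 0, tendsto_log_atTop.eventually_gt_atTop 0] with T hT hlog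
    have hε : 0 < T ^ (-s⁻¹) := Real.rpow_pos_of_pos hT _
    gcongr
    exacts [integrable_smoothedRiesz_dist hs.le hε, integrable_truncatedRiesz_dist hs.le hε,
      fun y => smoothedRiesz_le_truncatedRiesz hs.le hε]

end KernelIntegrals

section Invariance

variable {E : Type*} [NormedAddCommGroup E] [InnerProductSpace ℝ E]

lemma exists_linearIsometryEquiv_apply_eq_s10 {x y : E} (h : ‖x‖ = ‖y‖) :
    ∃ g : E ≃ₗᵢ[ℝ] E, g x = y :=
  ⟨Submodule.reflection (ℝ ∙ (x - y))ᗮ, Submodule.reflection_sub h⟩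

lemma dist_sq_of_mem_sphere {x y : E} (hx : x ∈ sphere (0 : E) 1) (hy : y ∈ sphere (0 : E) 1) :
    dist x y ^ 2 = 2 - 2 * ⟪x, y⟫ := by
  rw [mem_sphere_zero_iff_norm] at hx hy
  rw [dist_eq_norm, norm_sub_sq_real, hx, hy]
  ring

lemma abs_inner_le_one_of_mem_sphere {x y : E} (hx : x ∈ sphere (0 : E) 1)
    (hy : y ∈ sphere (0 : E) 1) : |⟪x, y⟫| ≤ 1 := by
  rw [mem_sphere_zero_iff_norm] at hx hy
  simpa only [hx, hy, mul_one] using abs_real_inner_le_norm x y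

variable [MeasurableSpace E]

/-- A measure concentrated on the unit sphere and invariant under all linear isometries. Finiteness
and normalisation are left to separate instances. -/
structure IsSphereInvariant (μ : Measure E) : Prop where
  ae_mem : ∀ᵐ x ∂μ, x ∈ sphere (0 : E) 1
  map_eq : ∀ g : E ≃ₗᵢ[ℝ] E, μ.map g = μ

namespace IsSphereInvariant

variable {μ τ : Measure E}

lemma smul (hμ : IsSphereInvariant μ) (c : ℝ≥0∞) : IsSphereInvariant (c • μ) :=
  ⟨Measure.ae_smul_measure hμ.ae_mem c, fun g => by rw [Measure.map_smul, hμ.map_eq g]⟩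

lemma ae_eq_univ (hμ : IsSphereInvariant μ) : sphere (0 : E) 1 =ᵐ[μ] Set.univ :=
  eventuallyEq_univ.2 hμ.ae_mem

variable [BorelSpace E] {x e : E}

lemma measurePreserving (hμ : IsSphereInvariant μ) (g : E ≃ₗᵢ[ℝ] E) :
    MeasurePreserving g.toHomeomorph.toMeasurableEquiv μ μ :=
  ⟨g.continuous.measurable, hμ.map_eq g⟩

lemma measure_closedBall (hμ : IsSphereInvariant μ) (hx : x ∈ sphere (0 : E) 1)
    (he : e ∈ sphere (0 : E) 1) (r : ℝ) : μ (closedBall x r) = μ (closedBall e r) := by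
  obtain ⟨g, rfl⟩ := exists_linearIsometryEquiv_apply_eq_s10
    ((mem_sphere_zero_iff_norm.1 hx).trans (mem_sphere_zero_iff_norm.1 he).symm)
  rw [← (hμ.measurePreserving g).measure_preimage_equiv (closedBall (g x) r)]
  exact congrArg μ (g.isometry.preimage_closedBall x r).symm

lemma integral_eq_of_forall_isometry (hμ : IsSphereInvariant μ) {F : E → E → ℝ}
    (hF : ∀ (g : E ≃ₗᵢ[ℝ] E) (x y : E), F (g x) (g y) = F x y)
    (hx : x ∈ sphere (0 : E) 1) (he : e ∈ sphere (0 : E) 1) :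
    ∫ y, F x y ∂μ = ∫ y, F e y ∂μ := by
  obtain ⟨g, rfl⟩ := exists_linearIsometryEquiv_apply_eq_s10
    ((mem_sphere_zero_iff_norm.1 hx).trans (mem_sphere_zero_iff_norm.1 he).symm)
  rw [← (hμ.measurePreserving g).integral_comp' (F (g x))]
  exact integral_congr_ae (ae_of_all _ fun y => (hF g x y).symm)

variable [SecondCountableTopology E] [IsFiniteMeasure μ] [IsFiniteMeasure τ]

lemma measure_closedBall_mul_measure_univ (hμ : IsSphereInvariant μ) (hτ : IsSphereInvariant τ)
    (he : e ∈ sphere (0 : E) 1) (r : ℝ) :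
    μ (closedBall e r) * τ Set.univ = τ (closedBall e r) * μ Set.univ := by
  have hs : MeasurableSet {p : E × E | dist p.1 p.2 ≤ r} :=
    measurableSet_le (measurable_fst.dist measurable_snd) measurable_const
  have hμτ : (μ.prod τ) {p : E × E | dist p.1 p.2 ≤ r} = τ (closedBall e r) * μ Set.univ := by
    rw [Measure.prod_apply hs, ← lintegral_const]
    refine lintegral_congr_ae (hμ.ae_mem.mono fun x hx => ?_)
    rw [← hτ.measure_closedBall hx he r]
    exact congrArg τ (Set.ext fun y => mem_closedBall'.symm)
  have hτμ : (μ.prod τ) {p : E × E | dist p.1 p.2 ≤ r} = μ (closedBall e r) * τ Set.univ := by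
    rw [Measure.prod_apply_symm hs, ← lintegral_const]
    refine lintegral_congr_ae (hτ.ae_mem.mono fun y hy => ?_)
    rw [← hμ.measure_closedBall hy he r]
    rfl
  exact hτμ.symm.trans hμτ

lemma density_mul_measureReal_univ (hμ : IsSphereInvariant μ) (hτ : IsSphereInvariant τ)
    (he : e ∈ sphere (0 : E) 1) {s α β : ℝ}
    (hα : Tendsto (fun r : ℝ => μ.real (closedBall e r) / r ^ s) (𝓝[>] 0) (𝓝 α))
    (hβ : Tendsto (fun r : ℝ => τ.real (closedBall e r) / r ^ s) (𝓝[>] 0) (𝓝 β)) :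
    α * τ.real Set.univ = β * μ.real Set.univ := by
  refine tendsto_nhds_unique (hα.mul_const _) ((hβ.mul_const _).congr fun r => ?_)
  have h := congrArg ENNReal.toReal (hμ.measure_closedBall_mul_measure_univ hτ he r)
  simp only [ENNReal.toReal_mul, ← measureReal_def] at h
  rw [div_mul_eq_mul_div, div_mul_eq_mul_div, h]

end IsSphereInvariant

end Invariance

section PositiveDefiniteness

lemma card_sq_mul_le_sum_inner {X H ι : Type*} [MeasurableSpace X] [NormedAddCommGroup H]
    [InnerProductSpace ℝ H] [CompleteSpace H] [Fintype ι] {σ : Measure X} [IsProbabilityMeasure σ]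
    {S : Set X} (hS : ∀ᵐ x ∂σ, x ∈ S) {Φ : X → H} (hΦ : Integrable Φ σ) {I : ℝ}
    (hI : ∀ x ∈ S, ∫ y, ⟪Φ x, Φ y⟫ ∂σ = I) {x : ι → X} (hx : ∀ k, x k ∈ S) :
    (Fintype.card ι : ℝ) ^ 2 * I ≤ ∑ j, ∑ k, ⟪Φ (x j), Φ (x k)⟫ := by
  set m : H := ∫ y, Φ y ∂σ with hm
  have hinner : ∀ z ∈ S, ⟪Φ z, m⟫ = I := fun z hz => by
    rw [hm, ← integral_inner hΦ, hI z hz]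
  have hmm : ⟪m, m⟫ = I := by
    rw [hm, ← integral_inner hΦ, ← hm]
    calc ∫ y, ⟪m, Φ y⟫ ∂σ = ∫ _, I ∂σ :=
          integral_congr_ae (hS.mono fun y hy => by
            simp only [real_inner_comm (Φ y) m, hinner y hy])
      _ = I := by rw [integral_const, probReal_univ, one_smul]
  have hsum : ⟪∑ j, Φ (x j), m⟫ = Fintype.card ι * I := by
    rw [sum_inner, Finset.sum_congr rfl fun j _ => hinner (x j) (hx j), Finset.sum_const,
      Finset.card_univ, nsmul_eq_mul]
  have hnorm : 0 ≤ ‖∑ j, Φ (x j) - (Fintype.card ι : ℝ) • m‖ ^ 2 := sq_nonneg _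
  rw [norm_sub_sq_real, ← real_inner_self_eq_norm_sq, ← real_inner_self_eq_norm_sq,
    real_inner_smul_right, real_inner_smul_right, real_inner_smul_left, hsum, hmm, sum_inner,
    Finset.sum_congr rfl fun j _ => inner_sum _ _ _] at hnorm
  linarith

variable {E : Type*} [NormedAddCommGroup E] [InnerProductSpace ℝ E]

lemma exists_continuous_inner_eq_inner_pow (E : Type*) [NormedAddCommGroup E]
    [InnerProductSpace ℝ E] [FiniteDimensional ℝ E] (n : ℕ) :
    ∃ (m : ℕ) (Φ : E → EuclideanSpace ℝ (Fin n → Fin m)), Continuous Φ ∧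
      ∀ x y, ⟪Φ x, Φ y⟫ = ⟪x, y⟫ ^ n := by
  let b := stdOrthonormalBasis ℝ E
  refine ⟨Module.finrank ℝ E, fun x => WithLp.toLp 2 fun p => ∏ i, ⟪b (p i), x⟫, by fun_prop,
    fun x y => ?_⟩
  rw [← b.sum_inner_mul_inner x y, Fintype.sum_pow, PiLp.inner_apply]
  refine Finset.sum_congr rfl fun p _ => ?_
  rw [RCLike.inner_apply, conj_trivial, ← Finset.prod_mul_distrib]
  exact Finset.prod_congr rfl fun i _ => by rw [real_inner_comm x, mul_comm]

lemma ringChoose_add_sub_one_nonneg {α : ℝ} (hα : 0 < α) (n : ℕ) :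
    0 ≤ Ring.choose (α + n - 1) n := by
  have h := Ring.factorial_nsmul_multichoose_eq_ascPochhammer α n
  rw [Polynomial.ascPochhammer_smeval_eq_eval, nsmul_eq_mul] at h
  have hmulti : Ring.choose (α + n - 1) n = Ring.multichoose α n := by
    rw [Ring.choose]
    congr 1
    ring
  rw [hmulti]
  exact (pos_of_mul_pos_right (h ▸ ascPochhammer_pos n α hα) (Nat.cast_nonneg _)).le

lemma exists_nonneg_hasSum_sub_mul_rpow {A B α : ℝ} (hB : 0 ≤ B) (hAB : B < A) (hα : 0 < α) :
    ∃ b : ℕ → ℝ, (∀ n, 0 ≤ b n) ∧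
      ∀ t : ℝ, |t| ≤ 1 → HasSum (fun n => b n * t ^ n) ((A - B * t) ^ (-α)) := by
  have hA : 0 < A := hB.trans_lt hAB
  refine ⟨fun n => A ^ (-α) * (Ring.choose (α + n - 1) n * (B / A) ^ n), fun n =>
    mul_nonneg (Real.rpow_nonneg hA.le _)
      (mul_nonneg (ringChoose_add_sub_one_nonneg hα n) (by positivity)),
    fun t ht => ?_⟩
  have hu : |B / A * t| < 1 := by
    rw [abs_mul, abs_of_nonneg (by positivity)]
    exact (mul_le_of_le_one_right (by positivity) ht).trans_lt ((div_lt_one hA).2 hAB)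
  have hseries := ((Real.one_div_one_sub_rpow_hasFPowerSeriesOnBall_zero α).hasSum
    (y := B / A * t) (by
      rwa [Metric.mem_eball, edist_zero_right, ← ofReal_norm, Real.norm_eq_abs,
        ENNReal.ofReal_lt_one])).mul_left (A ^ (-α))
  have hvalue : A ^ (-α) * (1 / (1 - (0 + B / A * t)) ^ α) = (A - B * t) ^ (-α) := by
    have hpos : 0 ≤ 1 - B / A * t := by linarith [(abs_lt.1 hu).2]
    rw [zero_add, one_div, ← Real.rpow_neg hpos, ← Real.mul_rpow hA.le hpos]
    congr 1
    field_simp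
  rw [hvalue] at hseries
  refine hseries.congr_fun fun n => ?_
  rw [FormalMultilinearSeries.ofScalars_apply_eq, smul_eq_mul, mul_pow]
  ring

lemma exists_nonneg_hasSum_smoothedRiesz_dist {s ε : ℝ} (hs : 0 < s) (hε : 0 < ε) :
    ∃ b : ℕ → ℝ, (∀ n, 0 ≤ b n) ∧ ∀ x ∈ sphere (0 : E) 1, ∀ y ∈ sphere (0 : E) 1,
      HasSum (fun n => b n * ⟪x, y⟫ ^ n) (smoothedRiesz s ε (dist x y)) := by
  obtain ⟨b, hb, hsum⟩ := exists_nonneg_hasSum_sub_mul_rpow (A := 2 + ε ^ 2) zero_le_two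
    (lt_add_of_pos_right 2 (pow_pos hε 2)) (half_pos hs)
  refine ⟨b, hb, fun x hx y hy => ?_⟩
  have h := hsum ⟪x, y⟫ (abs_inner_le_one_of_mem_sphere hx hy)
  rwa [add_sub_right_comm, ← dist_sq_of_mem_sphere hx hy] at h

variable [FiniteDimensional ℝ E] [MeasurableSpace E] [BorelSpace E] {σ : Measure E}
  [IsProbabilityMeasure σ] {ι : Type*} [Fintype ι] {x : ι → E} {e : E}

namespace IsSphereInvariant

lemma card_sq_mul_integral_inner_pow_le (hσ : IsSphereInvariant σ)
    (hx : ∀ k, x k ∈ sphere (0 : E) 1) (he : e ∈ sphere (0 : E) 1) (n : ℕ) :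
    (Fintype.card ι : ℝ) ^ 2 * ∫ y, ⟪e, y⟫ ^ n ∂σ ≤ ∑ j, ∑ k, ⟪x j, x k⟫ ^ n := by
  obtain ⟨m, Φ, hΦ, hinner⟩ := exists_continuous_inner_eq_inner_pow E n
  obtain ⟨C, hC⟩ := (isCompact_sphere (0 : E) 1).exists_bound_of_continuousOn hΦ.continuousOn
  have hint : Integrable Φ σ :=
    Integrable.of_bound hΦ.aestronglyMeasurable C (hσ.ae_mem.mono hC)
  simp only [← hinner]
  refine card_sq_mul_le_sum_inner hσ.ae_mem hint (fun z hz => ?_) hx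
  exact hσ.integral_eq_of_forall_isometry (F := fun z y => ⟪Φ z, Φ y⟫)
    (fun g z y => by rw [hinner, hinner, g.inner_map_map]) hz he

lemma card_sq_mul_integral_smoothedRiesz_le (hσ : IsSphereInvariant σ)
    (hx : ∀ k, x k ∈ sphere (0 : E) 1) (he : e ∈ sphere (0 : E) 1) {s ε : ℝ} (hs : 0 < s)
    (hε : 0 < ε) :
    (Fintype.card ι : ℝ) ^ 2 * ∫ y, smoothedRiesz s ε (dist e y) ∂σ
      ≤ ∑ j, ∑ k, smoothedRiesz s ε (dist (x j) (x k)) := by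
  obtain ⟨b, hb, hsum⟩ := exists_nonneg_hasSum_smoothedRiesz_dist (E := E) hs hε
  have hsumInt : HasSum (fun n => ∫ y, b n * ⟪e, y⟫ ^ n ∂σ)
      (∫ y, smoothedRiesz s ε (dist e y) ∂σ) := by
    refine hasSum_integral_of_dominated_convergence (fun n _ => b n)
      (fun n => (by fun_prop : Continuous fun y => b n * ⟪e, y⟫ ^ n).aestronglyMeasurable)
      (fun n => ?_) (ae_of_all _ fun _ => ?_) (integrable_const _) ?_
    · filter_upwards [hσ.ae_mem] with y hy
      rw [norm_mul, norm_pow, Real.norm_of_nonneg (hb n), Real.norm_eq_abs]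
      exact mul_le_of_le_one_right (hb n)
        (pow_le_one₀ (abs_nonneg _) (abs_inner_le_one_of_mem_sphere he hy))
    · have h := (hsum e he e he).summable
      simpa only [real_inner_self_eq_norm_sq, mem_sphere_zero_iff_norm.1 he, one_pow, mul_one]
        using h
    · filter_upwards [hσ.ae_mem] with y hy using hsum e he y hy
  refine hasSum_le (fun n => ?_) (hsumInt.mul_left _)
    (hasSum_sum fun j _ => hasSum_sum fun k _ => hsum (x j) (hx j) (x k) (hx k))
  simp only [integral_const_mul, ← Finset.mul_sum, mul_left_comm _ (b n)]
  exact mul_le_mul_of_nonneg_left (hσ.card_sq_mul_integral_inner_pow_le hx he n) (hb n)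

end IsSphereInvariant

end PositiveDefiniteness

section Energy

/-- The Riesz `s`-energy `∑_{j ≠ k} |x_j - x_k|^{-s}` of a finite configuration, with value `∞` if
two of its points coincide. -/
def rieszEnergy {X ι : Type*} [EDist X] [Fintype ι] [DecidableEq ι] (s : ℝ) (x : ι → X) : ℝ≥0∞ :=
  ∑ j, ∑ k, if j ≠ k then edist (x j) (x k) ^ (-s) else 0

/-- The minimal Riesz `s`-energy of `N`-point configurations in `S`; for the unit sphere this is
`minRieszEnergy`. -/
def minRieszEnergyOn {X : Type*} [EDist X] (s : ℝ) (S : Set X) (N : ℕ) : ℝ≥0∞ :=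
  ⨅ x : {x : Fin N → X // ∀ k, x k ∈ S}, rieszEnergy s x.1

variable {X : Type*} [PseudoMetricSpace X] {s ε : ℝ}

lemma edist_rpow_neg_eq_ofReal {x y : X} (h : 0 < dist x y) :
    edist x y ^ (-s) = ENNReal.ofReal (dist x y ^ (-s)) := by
  rw [edist_dist, ENNReal.ofReal_rpow_of_pos h]

lemma ofReal_smoothedRiesz_dist_le (hs : 0 < s) (x y : X) :
    ENNReal.ofReal (smoothedRiesz s ε (dist x y)) ≤ edist x y ^ (-s) := by
  rcases (dist_nonneg : 0 ≤ dist x y).eq_or_lt' with h | h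
  · rw [edist_dist, h, ENNReal.ofReal_zero, ENNReal.zero_rpow_of_neg (neg_neg_of_pos hs)]
    exact le_top
  · rw [edist_rpow_neg_eq_ofReal h]
    exact ENNReal.ofReal_le_ofReal (smoothedRiesz_le_rpow hs.le h)

lemma ofReal_sum_smoothedRiesz_le {ι : Type*} [Fintype ι] [DecidableEq ι] (hs : 0 < s)
    (hε : 0 ≤ ε) (x : ι → X) :
    ENNReal.ofReal (∑ j, ∑ k, smoothedRiesz s ε (dist (x j) (x k)))
      ≤ rieszEnergy s x + Fintype.card ι * ENNReal.ofReal (ε ^ (-s)) := by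
  have hdiag : ∑ j : ι, ∑ k, (if j = k then ENNReal.ofReal (ε ^ (-s)) else 0)
      = Fintype.card ι * ENNReal.ofReal (ε ^ (-s)) := by
    simp only [Finset.sum_ite_eq, Finset.mem_univ, if_true, Finset.sum_const, Finset.card_univ,
      nsmul_eq_mul]
  rw [← hdiag, rieszEnergy, ← Finset.sum_add_distrib,
    ENNReal.ofReal_sum_of_nonneg fun j _ => Finset.sum_nonneg fun k _ => smoothedRiesz_nonneg]
  refine Finset.sum_le_sum fun j _ => ?_
  rw [← Finset.sum_add_distrib, ENNReal.ofReal_sum_of_nonneg fun k _ => smoothedRiesz_nonneg]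
  refine Finset.sum_le_sum fun k _ => ?_
  by_cases hjk : j = k
  · simp only [hjk, ne_eq, not_true_eq_false, if_false, if_true, zero_add, dist_self,
      smoothedRiesz_zero hε, le_refl]
  · simpa only [hjk, ne_eq, not_false_eq_true, if_true, if_false, add_zero] using
      ofReal_smoothedRiesz_dist_le hs (x j) (x k)

lemma rieszEnergy_cons {n : ℕ} (z : X) (x : Fin n → X) :
    rieszEnergy s (Fin.cons z x : Fin (n + 1) → X)
      = rieszEnergy s x + 2 * ∑ k, edist (x k) z ^ (-s) := by
  simp only [rieszEnergy, Fin.sum_univ_succ, Fin.cons_zero, Fin.cons_succ, ne_eq,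
    not_true_eq_false, if_false, zero_add, Fin.succ_ne_zero, (Fin.succ_ne_zero _).symm,
    not_false_eq_true, if_true, Fin.succ_inj, Finset.sum_add_distrib, edist_comm z]
  ring

lemma exists_mem_notMem_le_integral_div {X : Type*} [MeasurableSpace X] {σ : Measure X}
    [IsProbabilityMeasure σ] {S U : Set X} (hS : ∀ᵐ x ∂σ, x ∈ S) (hU : MeasurableSet U) {η : ℝ}
    (hη : η < 1) (hUη : σ.real U ≤ η) {f : X → ℝ} (hf : Integrable f σ) (hf0 : ∀ x, 0 ≤ f x) :
    ∃ z ∈ S, z ∉ U ∧ f z ≤ (∫ x, f x ∂σ) / (1 - η) := by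
  have hmass : 1 - η ≤ (σ.restrict Uᶜ).real Set.univ := by
    rw [measureReal_restrict_apply_univ, probReal_compl_eq_one_sub hU]
    linarith
  have hne : σ.restrict Uᶜ ≠ 0 := fun h => by
    rw [h] at hmass
    simp only [measureReal_zero, Pi.zero_apply] at hmass
    linarith
  have hnull : σ.restrict Uᶜ {z | ¬ (z ∈ S ∧ z ∉ U)} = 0 :=
    ((ae_restrict_of_ae hS).and (ae_restrict_mem hU.compl))
  obtain ⟨z, hz, hle⟩ := exists_notMem_null_le_average hne hf.restrict hnull
  rw [Set.mem_ofPred_eq, not_not] at hz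
  refine ⟨z, hz.1, hz.2, hle.trans ?_⟩
  rw [average_eq, smul_eq_mul, inv_mul_eq_div]
  exact div_le_div₀ (integral_nonneg hf0) (setIntegral_le_integral hf (ae_of_all _ hf0))
    (sub_pos.2 hη) hmass

variable [MeasurableSpace X] [OpensMeasurableSpace X] {σ : Measure X} [IsProbabilityMeasure σ]
  {S : Set X} {p η A : ℝ} {n : ℕ}

lemma exists_mem_sum_edist_rpow_neg_le (hs : 0 ≤ s) (hε : 0 < ε) (hη : η < 1)
    (hS : ∀ᵐ x ∂σ, x ∈ S) (hp : ∀ x ∈ S, σ.real (closedBall x ε) ≤ p) (hnp : n * p ≤ η)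
    (hA : ∀ x ∈ S, ∫ y, truncatedRiesz s ε (dist x y) ∂σ ≤ A)
    {x : Fin n → X} (hx : ∀ k, x k ∈ S) :
    ∃ z ∈ S, ∑ k, edist (x k) z ^ (-s) ≤ n * ENNReal.ofReal (A / (1 - η)) := by
  have hU : σ.real (⋃ k, closedBall (x k) ε) ≤ η := by
    refine (measureReal_iUnion_fintype_le _).trans (le_trans ?_ hnp)
    simpa using Finset.sum_le_card_nsmul Finset.univ _ p fun k _ => hp (x k) (hx k)
  obtain ⟨z, hzS, hzU, hz⟩ := exists_mem_notMem_le_integral_div hS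
    (MeasurableSet.iUnion fun k => isClosed_closedBall.measurableSet) hη hU
    (f := fun z => ∑ k, truncatedRiesz s ε (dist (x k) z))
    (integrable_finsetSum _ fun k _ => integrable_truncatedRiesz_dist hs hε)
    fun z => Finset.sum_nonneg fun k _ => (truncatedRiesz_pos hε).le
  have hfar : ∀ k, ε < dist (x k) z := fun k =>
    lt_of_not_ge fun h => hzU (Set.mem_iUnion_of_mem k (mem_closedBall'.2 h))
  have hint : ∫ z, ∑ k, truncatedRiesz s ε (dist (x k) z) ∂σ ≤ n * A := by
    rw [integral_finsetSum _ fun k _ => integrable_truncatedRiesz_dist hs hε]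
    simpa using Finset.sum_le_card_nsmul Finset.univ _ A fun k _ => hA (x k) (hx k)
  refine ⟨z, hzS, ?_⟩
  calc ∑ k, edist (x k) z ^ (-s)
      = ENNReal.ofReal (∑ k, truncatedRiesz s ε (dist (x k) z)) := by
        rw [ENNReal.ofReal_sum_of_nonneg fun k _ => (truncatedRiesz_pos hε).le]
        exact Finset.sum_congr rfl fun k _ => by
          rw [edist_rpow_neg_eq_ofReal (hε.trans (hfar k)), truncatedRiesz_of_le (hfar k).le]
    _ ≤ ENNReal.ofReal (n * (A / (1 - η))) := by
        refine ENNReal.ofReal_le_ofReal (hz.trans ?_)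
        rw [← mul_div_assoc]
        exact div_le_div_of_nonneg_right hint (by linarith)
    _ = n * ENNReal.ofReal (A / (1 - η)) := by
        rw [ENNReal.ofReal_mul n.cast_nonneg, ENNReal.ofReal_natCast]

lemma exists_rieszEnergy_le (hs : 0 ≤ s) (hε : 0 < ε) (hη : η < 1)
    (hS : ∀ᵐ x ∂σ, x ∈ S) (hp : ∀ x ∈ S, σ.real (closedBall x ε) ≤ p) (hnp : n * p ≤ η)
    (hA : ∀ x ∈ S, ∫ y, truncatedRiesz s ε (dist x y) ∂σ ≤ A) :
    ∃ x : Fin n → X, (∀ k, x k ∈ S) ∧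
      rieszEnergy s x ≤ n ^ 2 * ENNReal.ofReal (A / (1 - η)) := by
  have hp0 : 0 ≤ p := hS.exists.elim fun w hw => measureReal_nonneg.trans (hp w hw)
  induction n with
  | zero => exact ⟨Fin.elim0, fun k => k.elim0, by simp [rieszEnergy]⟩
  | succ n ih =>
    have hnp' : n * p ≤ η := (mul_le_mul_of_nonneg_right (Nat.cast_le.2 n.le_succ) hp0).trans hnp
    obtain ⟨x, hx, hxE⟩ := ih hnp'
    obtain ⟨z, hz, hzE⟩ := exists_mem_sum_edist_rpow_neg_le hs hε hη hS hp hnp' hA hx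
    refine ⟨Fin.cons z x, Fin.cases hz hx, ?_⟩
    set B := ENNReal.ofReal (A / (1 - η))
    calc rieszEnergy s (Fin.cons z x : Fin (n + 1) → X)
        ≤ n ^ 2 * B + 2 * (n * B) := by
          rw [rieszEnergy_cons]
          gcongr
      _ ≤ n ^ 2 * B + 2 * (n * B) + B := le_self_add
      _ = (n + 1 : ℕ) ^ 2 * B := by
          push_cast
          ring

end Energy

section EnergyAsymptotics

variable {E : Type*} [NormedAddCommGroup E] [InnerProductSpace ℝ E] [MeasurableSpace E]
  [BorelSpace E] {σ : Measure E} [IsProbabilityMeasure σ] {e : E} {s ε κ : ℝ}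

namespace IsSphereInvariant

lemma minRieszEnergyOn_le (hσ : IsSphereInvariant σ) (he : e ∈ sphere (0 : E) 1) (hs : 0 ≤ s)
    (hε : 0 < ε) {N : ℕ} (hN : N * σ.real (closedBall e ε) < 1) :
    minRieszEnergyOn s (sphere (0 : E) 1) N ≤ ENNReal.ofReal ((N : ℝ) ^ 2 *
      ((∫ y, truncatedRiesz s ε (dist e y) ∂σ) / (1 - N * σ.real (closedBall e ε)))) := by
  have hball : ∀ x ∈ sphere (0 : E) 1, σ.real (closedBall x ε) ≤ σ.real (closedBall e ε) :=
    fun x hx => by rw [measureReal_def, hσ.measure_closedBall hx he, measureReal_def]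
  have hpot : ∀ x ∈ sphere (0 : E) 1, ∫ y, truncatedRiesz s ε (dist x y) ∂σ
      ≤ ∫ y, truncatedRiesz s ε (dist e y) ∂σ := fun x hx =>
    (hσ.integral_eq_of_forall_isometry (F := fun x y => truncatedRiesz s ε (dist x y))
      (fun g x y => by rw [g.dist_map]) hx he).le
  obtain ⟨x, hx, hxE⟩ := exists_rieszEnergy_le hs hε hN hσ.ae_mem hball le_rfl hpot
  rw [ENNReal.ofReal_mul (sq_nonneg _), ENNReal.ofReal_pow N.cast_nonneg, ENNReal.ofReal_natCast]
  exact (iInf_le (fun x : {x : Fin N → E // ∀ k, x k ∈ sphere (0 : E) 1} => rieszEnergy s x.1)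
    ⟨x, hx⟩).trans hxE

variable [FiniteDimensional ℝ E]

lemma le_toReal_minRieszEnergyOn_add (hσ : IsSphereInvariant σ) (he : e ∈ sphere (0 : E) 1)
    (hs : 0 < s) (hε : 0 < ε) {N : ℕ} (hfin : minRieszEnergyOn s (sphere (0 : E) 1) N ≠ ∞) :
    (N : ℝ) ^ 2 * ∫ y, smoothedRiesz s ε (dist e y) ∂σ
      ≤ (minRieszEnergyOn s (sphere (0 : E) 1) N).toReal + N * ε ^ (-s) := by
  have hbound : ENNReal.ofReal ((N : ℝ) ^ 2 * ∫ y, smoothedRiesz s ε (dist e y) ∂σ)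
      ≤ minRieszEnergyOn s (sphere (0 : E) 1) N + N * ENNReal.ofReal (ε ^ (-s)) := by
    rw [minRieszEnergyOn, ENNReal.iInf_add]
    refine le_iInf fun x => ?_
    have h := hσ.card_sq_mul_integral_smoothedRiesz_le x.2 he hs hε
    have h' := ofReal_sum_smoothedRiesz_le hs hε.le x.1
    rw [Fintype.card_fin] at h h'
    exact (ENNReal.ofReal_le_ofReal h).trans h'
  have hεs : 0 ≤ ε ^ (-s) := Real.rpow_nonneg hε.le _
  rw [← ENNReal.toReal_ofReal hεs, ← ENNReal.toReal_natCast, ← ENNReal.toReal_mul,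
    ← ENNReal.toReal_add hfin (by finiteness), ENNReal.toReal_natCast]
  exact (ENNReal.ofReal_le_iff_le_toReal (by finiteness)).1 hbound

/-- The lower bound uses the smoothing scale `ε ^ s = 1 / N`, for which the diagonal terms are
negligible; the upper bound uses the cut-off `ε ^ s = 1 / (N log N)`, for which the balls of radius
`ε` around `N` points have negligible total measure. -/
theorem tendsto_minRieszEnergyOn_sphere (hσ : IsSphereInvariant σ) (he : e ∈ sphere (0 : E) 1)
    (hs : 0 < s)
    (hlim : Tendsto (fun r : ℝ => σ.real (closedBall e r) / r ^ s) (𝓝[>] 0) (𝓝 κ)) :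
    Tendsto (fun N : ℕ => (minRieszEnergyOn s (sphere (0 : E) 1) N).toReal /
      ((N : ℝ) ^ 2 * Real.log N)) atTop (𝓝 κ) := by
  have hη := tendsto_mul_measureReal_closedBall_mul_log_rpow hs hlim
  have hlower : Tendsto (fun T : ℝ => (∫ y, smoothedRiesz s (T ^ (-s⁻¹)) (dist e y) ∂σ) / Real.log T
      - (Real.log T)⁻¹) atTop (𝓝 κ) := by
    simpa only [sub_zero, Pi.inv_apply] using
      (tendsto_integral_smoothedRiesz_div_log hs hlim).sub tendsto_log_atTop.inv_tendsto_atTop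
  have hupper : Tendsto (fun T : ℝ =>
      (∫ y, truncatedRiesz s ((T * Real.log T) ^ (-s⁻¹)) (dist e y) ∂σ) / Real.log T
        / (1 - T * σ.real (closedBall e ((T * Real.log T) ^ (-s⁻¹))))) atTop (𝓝 κ) := by
    simpa only [sub_zero, div_one, Pi.div_def] using
      (tendsto_integral_truncatedRiesz_mul_log_div_log hs hlim).div (hη.const_sub 1) (by norm_num)
  have hbound : ∀ᶠ T : ℝ in atTop, 0 < T ∧ 0 < Real.log T ∧
      T * σ.real (closedBall e ((T * Real.log T) ^ (-s⁻¹))) < 1 :=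
    (eventually_gt_atTop 0).and <| (tendsto_log_atTop.eventually_gt_atTop 0).and <|
      hη.eventually_lt_const one_pos
  have hnat := tendsto_natCast_atTop_atTop (R := ℝ)
  refine tendsto_of_tendsto_of_tendsto_of_le_of_le' (hlower.comp hnat) (hupper.comp hnat) ?_ ?_
  all_goals filter_upwards [hnat.eventually hbound] with N ⟨hN, hlog, hηN⟩
  all_goals
    have hle :=
      hσ.minRieszEnergyOn_le he hs.le (Real.rpow_pos_of_pos (mul_pos hN hlog) _) hηN
  · have h := hσ.le_toReal_minRieszEnergyOn_add he hs (Real.rpow_pos_of_pos hN (-s⁻¹))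
      (ne_top_of_le_ne_top ENNReal.ofReal_ne_top hle)
    rw [← Real.rpow_mul hN.le, neg_mul_neg, inv_mul_cancel₀ hs.ne', Real.rpow_one] at h
    rw [Function.comp_apply, inv_eq_one_div (Real.log _), ← sub_div, ← div_div,
      div_le_div_iff_of_pos_right hlog, le_div_iff₀ (pow_pos hN 2)]
    linarith
  · have hnonneg : 0 ≤ ∫ y, truncatedRiesz s ((N * Real.log N) ^ (-s⁻¹)) (dist e y) ∂σ :=
      integral_nonneg fun y =>
        (truncatedRiesz_pos (Real.rpow_pos_of_pos (mul_pos hN hlog) _)).le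
    rw [Function.comp_apply, div_right_comm, ← div_div,
      div_le_div_iff_of_pos_right hlog, div_le_iff₀' (pow_pos hN 2)]
    exact ENNReal.toReal_le_of_le_ofReal
      (mul_nonneg (sq_nonneg _) (div_nonneg hnonneg (sub_nonneg.2 hηN.le))) hle

end IsSphereInvariant

end EnergyAsymptotics

section PolarCaps

variable {F : Type*} [NormedAddCommGroup F] {r c ρ : ℝ}

/-- The cap of the unit sphere of `ℝ × F`, centred at the pole `(1, 0)`, on which the first
coordinate is at least `c`. For `0 < c` it is a graph over the ball of radius `√(1 - c ^ 2)` in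
`F`. -/
def polarCap (F : Type*) [NormedAddCommGroup F] (c : ℝ) :
    Set (WithLp 2 (ℝ × F)) :=
  sphere 0 1 ∩ {z | c ≤ z.fst}

lemma polarCap_subset_sphere : polarCap F c ⊆ sphere 0 1 :=
  Set.inter_subset_left

lemma pole_mem_sphere : WithLp.toLp 2 ((1 : ℝ), (0 : F)) ∈ sphere (0 : WithLp 2 (ℝ × F)) 1 := by
  rw [mem_sphere_zero_iff_norm, WithLp.norm_toLp_fst, norm_one]

lemma mem_sphere_iff_sq_add_sq {z : WithLp 2 (ℝ × F)} :
    z ∈ sphere (0 : WithLp 2 (ℝ × F)) 1 ↔ z.fst ^ 2 + ‖z.snd‖ ^ 2 = 1 := by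
  rw [mem_sphere_zero_iff_norm, ← sq_eq_sq₀ (norm_nonneg z) zero_le_one,
    WithLp.prod_norm_sq_eq_of_L2, Real.norm_eq_abs, sq_abs, one_pow]

lemma closedBall_pole_inter_sphere (hr : 0 ≤ r) :
    closedBall (WithLp.toLp 2 ((1 : ℝ), (0 : F))) r ∩ sphere 0 1 = polarCap F (1 - r ^ 2 / 2) := by
  ext z
  rw [polarCap, Set.inter_comm]
  refine and_congr_right fun hz => ?_
  have hdist : dist z (WithLp.toLp 2 ((1 : ℝ), (0 : F))) ^ 2 = 2 - 2 * z.fst := by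
    rw [dist_eq_norm, WithLp.prod_norm_sq_eq_of_L2]
    change |z.fst - 1| ^ 2 + ‖z.snd - 0‖ ^ 2 = 2 - 2 * z.fst
    rw [sq_abs, sub_zero]
    linear_combination mem_sphere_iff_sq_add_sq.1 hz
  rw [mem_closedBall, ← sq_le_sq₀ dist_nonneg hr, hdist, Set.mem_ofPred_eq]
  constructor <;> intro h <;> linarith

lemma norm_snd_le_of_mem_polarCap (hc : 0 ≤ c) (hρ : 0 ≤ ρ) (h : ρ ^ 2 + c ^ 2 = 1)
    {z : WithLp 2 (ℝ × F)} (hz : z ∈ polarCap F c) : ‖z.snd‖ ≤ ρ := by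
  have hsq := mem_sphere_iff_sq_add_sq.1 hz.1
  have hcz := pow_le_pow_left₀ hc hz.2 2
  exact (sq_le_sq₀ (norm_nonneg _) hρ).1 (by linarith)

lemma toLp_sqrt_mem_polarCap (h : ρ ^ 2 + c ^ 2 = 1) {u : F}
    (hu : u ∈ closedBall (0 : F) ρ) :
    WithLp.toLp 2 (√(1 - ‖u‖ ^ 2), u) ∈ polarCap F c := by
  have hle := pow_le_pow_left₀ (norm_nonneg u) (mem_closedBall_zero_iff.1 hu) 2
  refine ⟨mem_sphere_iff_sq_add_sq.2 ?_, Real.le_sqrt_of_sq_le (by linarith)⟩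
  change √(1 - ‖u‖ ^ 2) ^ 2 + ‖u‖ ^ 2 = 1
  rw [Real.sq_sqrt (by nlinarith), sub_add_cancel]

lemma toLp_sqrt_snd_eq_of_mem_polarCap (hc : 0 ≤ c) {z : WithLp 2 (ℝ × F)}
    (hz : z ∈ polarCap F c) : WithLp.toLp 2 (√(1 - ‖z.snd‖ ^ 2), z.snd) = z := by
  have hsq := mem_sphere_iff_sq_add_sq.1 hz.1
  rw [← hsq, add_sub_cancel_right, Real.sqrt_sq (hc.trans hz.2)]
  rfl

lemma mul_abs_sqrt_one_sub_sq_sub_le {x y : ℝ} (hc : 0 ≤ c) (h : ρ ^ 2 + c ^ 2 = 1) (hx : 0 ≤ x)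
    (hxρ : x ≤ ρ) (hy : 0 ≤ y) (hyρ : y ≤ ρ) :
    c * |√(1 - x ^ 2) - √(1 - y ^ 2)| ≤ ρ * |x - y| := by
  have hx2 := pow_le_pow_left₀ hx hxρ 2
  have hy2 := pow_le_pow_left₀ hy hyρ 2
  have hcx : c ≤ √(1 - x ^ 2) := Real.le_sqrt_of_sq_le (by linarith)
  have hcy : c ≤ √(1 - y ^ 2) := Real.le_sqrt_of_sq_le (by linarith)
  have hprod : |√(1 - x ^ 2) - √(1 - y ^ 2)| * (√(1 - x ^ 2) + √(1 - y ^ 2))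
      = |x - y| * (x + y) := by
    rw [← abs_of_nonneg (add_nonneg hx hy), ← abs_of_nonneg ((hc.trans hcx).trans
      (le_add_of_nonneg_right (hc.trans hcy))), ← abs_mul, ← abs_mul, ← abs_neg]
    congr 1
    linear_combination Real.sq_sqrt (show 0 ≤ 1 - y ^ 2 by nlinarith)
      - Real.sq_sqrt (show 0 ≤ 1 - x ^ 2 by nlinarith)
  nlinarith [abs_nonneg (x - y), abs_nonneg (√(1 - x ^ 2) - √(1 - y ^ 2))]

lemma lipschitzOnWith_toLp_sqrt (hc : 0 < c) (h : ρ ^ 2 + c ^ 2 = 1) :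
    LipschitzOnWith (c⁻¹).toNNReal (fun u : F => WithLp.toLp 2 (√(1 - ‖u‖ ^ 2), u))
      (closedBall 0 ρ) := by
  refine LipschitzOnWith.of_dist_le_mul fun u hu v hv => ?_
  rw [mem_closedBall_zero_iff] at hu hv
  have hρ : 0 ≤ ρ := (norm_nonneg u).trans hu
  have hfst : c * |√(1 - ‖u‖ ^ 2) - √(1 - ‖v‖ ^ 2)| ≤ ρ * ‖u - v‖ :=
    (mul_abs_sqrt_one_sub_sq_sub_le hc.le h (norm_nonneg u) hu (norm_nonneg v) hv).trans
      (mul_le_mul_of_nonneg_left (abs_norm_sub_norm_le u v) hρ)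
  have hfst_sq := pow_le_pow_left₀ (by positivity) hfst 2
  rw [mul_pow, mul_pow, sq_abs] at hfst_sq
  rw [Real.coe_toNNReal _ (inv_nonneg.2 hc.le), inv_mul_eq_div, le_div_iff₀ hc]
  refine (sq_le_sq₀ (by positivity) dist_nonneg).1 ?_
  rw [mul_pow, dist_eq_norm, dist_eq_norm, WithLp.prod_norm_sq_eq_of_L2, WithLp.sub_fst,
    WithLp.sub_snd, WithLp.toLp_fst, WithLp.toLp_snd, WithLp.toLp_fst, WithLp.toLp_snd,
    Real.norm_eq_abs, sq_abs]
  linear_combination hfst_sq + ‖u - v‖ ^ 2 * h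

end PolarCaps

section HausdorffCaps

variable {F : Type*} [NormedAddCommGroup F] [MeasurableSpace F]
  [BorelSpace F] {c ρ s : ℝ}

lemma hausdorffMeasure_closedBall_le_polarCap (hs : 0 ≤ s) (h : ρ ^ 2 + c ^ 2 = 1) :
    μH[s] (closedBall (0 : F) ρ) ≤ μH[s] (polarCap F c) := by
  have hlip : LipschitzOnWith 1 (fun z : WithLp 2 (ℝ × F) => z.snd) (polarCap F c) :=
    LipschitzOnWith.of_dist_le_mul fun z _ w _ => by
      rw [NNReal.coe_one, one_mul]
      exact WithLp.dist_snd_le z w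
  calc μH[s] (closedBall (0 : F) ρ)
      ≤ μH[s] ((fun z : WithLp 2 (ℝ × F) => z.snd) '' polarCap F c) :=
        measure_mono fun u hu => ⟨_, toLp_sqrt_mem_polarCap h hu, rfl⟩
    _ ≤ μH[s] (polarCap F c) := by
        simpa only [ENNReal.coe_one, ENNReal.one_rpow, one_mul] using
          hlip.hausdorffMeasure_image_le hs

lemma hausdorffMeasure_polarCap_le (hs : 0 ≤ s) (hc : 0 < c) (hρ : 0 ≤ ρ)
    (h : ρ ^ 2 + c ^ 2 = 1) :
    μH[s] (polarCap F c) ≤ ENNReal.ofReal c⁻¹ ^ s * μH[s] (closedBall (0 : F) ρ) :=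
  calc μH[s] (polarCap F c)
      ≤ μH[s] ((fun u : F => WithLp.toLp 2 (√(1 - ‖u‖ ^ 2), u)) '' closedBall 0 ρ) :=
        measure_mono fun z hz => ⟨z.snd,
          mem_closedBall_zero_iff.2 (norm_snd_le_of_mem_polarCap hc.le hρ h hz),
          toLp_sqrt_snd_eq_of_mem_polarCap hc.le hz⟩
    _ ≤ _ := (lipschitzOnWith_toLp_sqrt hc h).hausdorffMeasure_image_le hs

end HausdorffCaps

section HausdorffSphere

variable {E : Type*} [NormedAddCommGroup E] [InnerProductSpace ℝ E] [MeasurableSpace E]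
  [BorelSpace E]

lemma isSphereInvariant_hausdorffMeasure_restrict (s : ℝ) :
    IsSphereInvariant ((μH[s] : Measure E).restrict (sphere 0 1)) where
  ae_mem := ae_restrict_mem isClosed_sphere.measurableSet
  map_eq g := by
    have hpre : g ⁻¹' sphere (0 : E) 1 = sphere 0 1 := by
      simpa only [g.symm_apply_apply, map_zero] using g.isometry.preimage_sphere (0 : E) 1
    simpa only [LinearIsometryEquiv.coe_toIsometryEquiv, hpre] using
      ((g.toIsometryEquiv.measurePreserving_hausdorffMeasure s).restrict_preimage
        (isClosed_sphere (x := (0 : E)) (ε := 1)).measurableSet).map_eq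

lemma IsSphereInvariant.isFiniteMeasure [FiniteDimensional ℝ E] {μ : Measure E}
    (hμ : IsSphereInvariant μ) {e : E} (he : e ∈ sphere (0 : E) 1) {r : ℝ} (hr : 0 < r)
    (hfin : μ (closedBall e r) < ∞) : IsFiniteMeasure μ := by
  refine ⟨?_⟩
  rw [← measure_congr hμ.ae_eq_univ]
  exact (isCompact_sphere (0 : E) 1).measure_lt_top_of_nhdsWithin fun x hx =>
    ⟨closedBall x r, mem_nhdsWithin_of_mem_nhds (closedBall_mem_nhds x hr),
      (hμ.measure_closedBall hx he r).trans_lt hfin⟩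

end HausdorffSphere

section PolarCapDensity

lemma tendsto_one_sub_sq_div_two : Tendsto (fun r : ℝ => 1 - r ^ 2 / 2) (𝓝[>] 0) (𝓝 1) := by
  have h : Continuous fun r : ℝ => 1 - r ^ 2 / 2 := by fun_prop
  simpa using h.continuousWithinAt (s := Set.Ioi 0) (x := 0).tendsto

lemma tendsto_sqrt_one_sub_sq_div_four :
    Tendsto (fun r : ℝ => √(1 - r ^ 2 / 4)) (𝓝[>] 0) (𝓝 1) := by
  have h : Continuous fun r : ℝ => √(1 - r ^ 2 / 4) := by fun_prop
  simpa using h.continuousWithinAt (s := Set.Ioi 0) (x := 0).tendsto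

lemma eventually_one_sub_sq_div_two_pos : ∀ᶠ r : ℝ in 𝓝[>] 0, 0 < 1 - r ^ 2 / 2 :=
  tendsto_one_sub_sq_div_two.eventually_const_lt zero_lt_one

lemma mul_sqrt_sq_add_sq {r : ℝ} (hr : 0 ≤ 1 - r ^ 2 / 2) :
    (r * √(1 - r ^ 2 / 4)) ^ 2 + (1 - r ^ 2 / 2) ^ 2 = 1 := by
  rw [mul_pow, Real.sq_sqrt (by nlinarith)]
  ring

variable {F : Type*} [NormedAddCommGroup F] [MeasurableSpace F]

/-- The ball of radius `r` about the pole cuts out the polar cap over the ball of radius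
`r * √(1 - r ^ 2 / 4)`, and both `c = 1 - r ^ 2 / 2` and `√(1 - r ^ 2 / 4)` tend to `1`. -/
lemma tendsto_density_pole {μ : Measure (WithLp 2 (ℝ × F))} {n m₁ m₂ : ℕ} {v : ℝ}
    (hμ : ∀ᵐ z ∂μ, z ∈ sphere (0 : WithLp 2 (ℝ × F)) 1)
    (hle : ∀ c ρ : ℝ, 0 < c → 0 ≤ ρ → ρ ^ 2 + c ^ 2 = 1 →
      c ^ m₁ * (ρ ^ n * v) ≤ μ.real (polarCap F c) ∧
        μ.real (polarCap F c) ≤ c⁻¹ ^ m₂ * (ρ ^ n * v)) :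
    Tendsto (fun r : ℝ => μ.real (closedBall (WithLp.toLp 2 ((1 : ℝ), (0 : F))) r) / r ^ (n : ℝ))
      (𝓝[>] 0) (𝓝 v) := by
  have hc := tendsto_one_sub_sq_div_two
  have hρ := (tendsto_sqrt_one_sub_sq_div_four.pow n).mul_const v
  have hcap : ∀ r : ℝ, 0 < r → μ.real (closedBall (WithLp.toLp 2 ((1 : ℝ), (0 : F))) r)
      = μ.real (polarCap F (1 - r ^ 2 / 2)) := fun r hr => by
    rw [← closedBall_pole_inter_sphere hr.le]
    exact measureReal_congr (hμ.mono fun z hz => propext ⟨fun h => ⟨h, hz⟩, And.left⟩)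
  have hlower := (hc.pow m₁).mul hρ
  have hupper := ((hc.inv₀ one_ne_zero).pow m₂).mul hρ
  simp only [inv_one, one_pow, one_mul] at hlower hupper
  refine tendsto_of_tendsto_of_tendsto_of_le_of_le' hlower hupper ?_ ?_ <;>
    filter_upwards [self_mem_nhdsWithin, eventually_one_sub_sq_div_two_pos] with r (hr : 0 < r) hcr
  · have h := (hle _ _ hcr (by positivity) (mul_sqrt_sq_add_sq hcr.le)).1
    rw [Real.rpow_natCast, le_div_iff₀ (by positivity), hcap r hr]
    exact h.trans_eq' (by ring)
  · have h := (hle _ _ hcr (by positivity) (mul_sqrt_sq_add_sq hcr.le)).2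
    rw [Real.rpow_natCast, div_le_iff₀ (by positivity), hcap r hr]
    exact h.trans_eq (by ring)

end PolarCapDensity

section HausdorffDensity

variable {F : Type*} [NormedAddCommGroup F] [InnerProductSpace ℝ F] [FiniteDimensional ℝ F]
  [MeasurableSpace F] [BorelSpace F]

lemma hausdorffMeasure_restrict_sphere_polarCap {c : ℝ} (s : ℝ) :
    (μH[s] : Measure (WithLp 2 (ℝ × F))).restrict (sphere 0 1) (polarCap F c)
      = μH[s] (polarCap F c) := by
  rw [Measure.restrict_apply' isClosed_sphere.measurableSet,
    Set.inter_eq_left.2 polarCap_subset_sphere]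

lemma hausdorffMeasure_polarCap_lt_top {c ρ : ℝ} (hc : 0 < c) (hρ : 0 ≤ ρ)
    (h : ρ ^ 2 + c ^ 2 = 1) : μH[Module.finrank ℝ F] (polarCap F c) < ∞ :=
  (hausdorffMeasure_polarCap_le (Nat.cast_nonneg _) hc hρ h).trans_lt <| ENNReal.mul_lt_top
    (ENNReal.rpow_lt_top_of_nonneg (Nat.cast_nonneg _) ENNReal.ofReal_ne_top)
    measure_closedBall_lt_top

lemma tendsto_hausdorffMeasure_sphere_density :
    Tendsto (fun r : ℝ => ((μH[Module.finrank ℝ F] : Measure (WithLp 2 (ℝ × F))).restrict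
        (sphere 0 1)).real (closedBall (WithLp.toLp 2 ((1 : ℝ), (0 : F))) r)
          / r ^ (Module.finrank ℝ F : ℝ)) (𝓝[>] 0)
      (𝓝 ((μH[Module.finrank ℝ F] : Measure F).real (closedBall 0 1))) := by
  refine tendsto_density_pole (m₁ := 0) (m₂ := Module.finrank ℝ F)
    (isSphereInvariant_hausdorffMeasure_restrict _).ae_mem fun c ρ hc hρ h => ?_
  rw [← Measure.addHaar_real_closedBall' _ (0 : F) hρ, measureReal_def, measureReal_def,
    hausdorffMeasure_restrict_sphere_polarCap, pow_zero, one_mul]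
  refine ⟨ENNReal.toReal_mono (hausdorffMeasure_polarCap_lt_top hc hρ h).ne
    (hausdorffMeasure_closedBall_le_polarCap (Nat.cast_nonneg _) h), ?_⟩
  have hle := hausdorffMeasure_polarCap_le (F := F) (Nat.cast_nonneg (Module.finrank ℝ F)) hc hρ h
  have hreal := ENNReal.toReal_mono (ENNReal.mul_ne_top
    (ENNReal.rpow_ne_top_of_nonneg (Nat.cast_nonneg _) ENNReal.ofReal_ne_top)
    measure_closedBall_lt_top.ne) hle
  rwa [ENNReal.toReal_mul, ENNReal.rpow_natCast, ENNReal.toReal_pow,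
    ENNReal.toReal_ofReal (inv_nonneg.2 hc.le)] at hreal

instance isFiniteMeasure_hausdorffMeasure_restrict_sphere :
    IsFiniteMeasure ((μH[Module.finrank ℝ F] : Measure (WithLp 2 (ℝ × F))).restrict
      (sphere 0 1)) := by
  refine (isSphereInvariant_hausdorffMeasure_restrict _).isFiniteMeasure (r := 1)
    pole_mem_sphere one_pos ?_
  rw [Measure.restrict_apply' isClosed_sphere.measurableSet,
    closedBall_pole_inter_sphere zero_le_one]
  exact hausdorffMeasure_polarCap_lt_top (by norm_num) (by positivity)
    (mul_sqrt_sq_add_sq (r := 1) (by norm_num))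

lemma hausdorffMeasure_sphere_lt_top_s10 :
    μH[Module.finrank ℝ F] (sphere (0 : WithLp 2 (ℝ × F)) 1) < ∞ := by
  rw [← Measure.restrict_apply_univ]
  exact measure_lt_top _ _

lemma hausdorffMeasure_sphere_pos_s10 :
    0 < μH[Module.finrank ℝ F] (sphere (0 : WithLp 2 (ℝ × F)) 1) := by
  have hpos : 0 < μH[Module.finrank ℝ F] (closedBall (0 : F) √(1 / 2)) :=
    measure_closedBall_pos _ _ (by positivity)
  refine hpos.trans_le ((hausdorffMeasure_closedBall_le_polarCap (c := √(1 / 2))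
    (Nat.cast_nonneg _) ?_).trans (measure_mono Set.inter_subset_left))
  norm_num

end HausdorffDensity

section SurfaceMeasure

open scoped Pointwise

variable {E : Type*} [NormedAddCommGroup E] [InnerProductSpace ℝ E]

lemma Ioo_smul_sphere_inter_preimage (g : E ≃ₗᵢ[ℝ] E) (A : Set E) :
    Set.Ioo (0 : ℝ) 1 • (sphere (0 : E) 1 ∩ g ⁻¹' A)
      = g ⁻¹' (Set.Ioo (0 : ℝ) 1 • (sphere (0 : E) 1 ∩ A)) := by
  ext z
  constructor
  · rintro ⟨t, ht, x, ⟨hx, hxA⟩, rfl⟩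
    exact ⟨t, ht, g x, ⟨by simpa using hx, hxA⟩, (map_smul g t x).symm⟩
  · rintro ⟨t, ht, y, ⟨hy, hyA⟩, hz⟩
    refine ⟨t, ht, g.symm y, ⟨by simpa using hy, by simpa using hyA⟩, g.injective ?_⟩
    simpa using hz

/-- The surface measure of the unit sphere, as a measure on the ambient space: the pushforward of
`Measure.toSphere`, which is the dimension times the volume of the cone over a set. -/
def sphereSurface (E : Type*) [NormedAddCommGroup E] [InnerProductSpace ℝ E]
    [FiniteDimensional ℝ E] [MeasurableSpace E] [BorelSpace E] : Measure E :=
  (volume : Measure E).toSphere.map Subtype.val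

variable [FiniteDimensional ℝ E] [MeasurableSpace E] [BorelSpace E]

instance : IsFiniteMeasure (sphereSurface E) :=
  inferInstanceAs (IsFiniteMeasure ((volume : Measure E).toSphere.map Subtype.val))

lemma sphereSurface_apply {A : Set E} (hA : MeasurableSet A) :
    sphereSurface E A
      = Module.finrank ℝ E * volume (Set.Ioo (0 : ℝ) 1 • (sphere (0 : E) 1 ∩ A)) := by
  rw [sphereSurface, Measure.map_apply measurable_subtype_coe hA,
    Measure.toSphere_apply' _ (measurable_subtype_coe hA), Subtype.image_preimage_coe]

lemma sphereSurface_real_univ :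
    (sphereSurface E).real Set.univ = Module.finrank ℝ E * volume.real (ball (0 : E) 1) := by
  rw [← Measure.toSphere_real_apply_univ, sphereSurface, map_measureReal_apply
    measurable_subtype_coe .univ, Set.preimage_univ]

lemma isSphereInvariant_sphereSurface : IsSphereInvariant (sphereSurface E) where
  ae_mem := (ae_map_iff measurable_subtype_coe.aemeasurable isClosed_sphere.measurableSet).2 <|
    ae_of_all _ Subtype.property
  map_eq g := by
    ext A hA
    have hgA := g.continuous.measurable hA
    rw [Measure.map_apply g.continuous.measurable hA, sphereSurface_apply hgA,
      sphereSurface_apply hA, Ioo_smul_sphere_inter_preimage]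
    exact congrArg _ (g.measurePreserving.measure_preimage_equiv (f := g.toMeasurableEquiv) _)

end SurfaceMeasure

section ConeVolume

open scoped Pointwise

lemma lintegral_Ioo_ofReal_pow {h : ℝ} (hh : 0 ≤ h) (n : ℕ) :
    ∫⁻ t in Set.Ioo 0 h, ENNReal.ofReal (t ^ n) = ENNReal.ofReal (h ^ (n + 1) / (n + 1)) := by
  rw [setLIntegral_congr Ioo_ae_eq_Ioc, ← ofReal_integral_eq_lintegral_ofReal
    (intervalIntegral.intervalIntegrable_pow n).1, ← intervalIntegral.integral_of_le hh,
    integral_pow, zero_pow n.succ_ne_zero, sub_zero]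
  exact (ae_restrict_mem measurableSet_Ioc).mono fun t ht => pow_nonneg ht.1.le n

variable {F : Type*} [NormedAddCommGroup F]

/-- The solid circular cone with apex at the origin, axis along the first coordinate, height `h`
and slope `k`, without its apex and its base. -/
def circularCone (F : Type*) [NormedAddCommGroup F] (h k : ℝ) : Set (WithLp 2 (ℝ × F)) :=
  {z | z.fst ∈ Set.Ioo 0 h ∧ ‖z.snd‖ ≤ k * z.fst}

lemma circularCone_subset_Ioo_smul_polarCap [NormedSpace ℝ F] {c ρ : ℝ} (hc : 0 < c)
    (h : ρ ^ 2 + c ^ 2 = 1) :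
    circularCone F c (ρ / c) ⊆ Set.Ioo (0 : ℝ) 1 • polarCap F c := by
  rintro z ⟨⟨hz0, hzc⟩, hz⟩
  have hsq : ‖z‖ ^ 2 ≤ (z.fst / c) ^ 2 := by
    have h2 := pow_le_pow_left₀ (norm_nonneg _) hz 2
    rw [WithLp.prod_norm_sq_eq_of_L2, Real.norm_eq_abs, sq_abs]
    calc z.fst ^ 2 + ‖z.snd‖ ^ 2 ≤ z.fst ^ 2 + (ρ / c * z.fst) ^ 2 := by gcongr
      _ = (ρ ^ 2 + c ^ 2) * (z.fst / c) ^ 2 := by field_simp; ring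
      _ = (z.fst / c) ^ 2 := by rw [h, one_mul]
  have hle : ‖z‖ ≤ z.fst / c := (sq_le_sq₀ (norm_nonneg z) (by positivity)).1 hsq
  have hpos : 0 < ‖z‖ := hz0.trans_le ((le_abs_self _).trans (WithLp.norm_fst_le ℝ z))
  refine ⟨‖z‖, ⟨hpos, hle.trans_lt ((div_lt_one hc).2 hzc)⟩, ‖z‖⁻¹ • z, ⟨?_, ?_⟩,
    smul_inv_smul₀ hpos.ne' z⟩
  · rw [mem_sphere_zero_iff_norm, norm_smul, norm_inv, norm_norm, inv_mul_cancel₀ hpos.ne']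
  · change c ≤ ‖z‖⁻¹ * z.fst
    rwa [inv_mul_eq_div, le_div_iff₀ hpos, mul_comm, ← le_div_iff₀ hc]

lemma Ioo_smul_polarCap_subset_circularCone [NormedSpace ℝ F] {c ρ : ℝ} (hc : 0 < c) (hρ : 0 ≤ ρ)
    (h : ρ ^ 2 + c ^ 2 = 1) :
    Set.Ioo (0 : ℝ) 1 • polarCap F c ⊆ circularCone F 1 (ρ / c) := by
  rintro _ ⟨t, ⟨ht0, ht1⟩, z, hz, rfl⟩
  have hz1 : z.fst ≤ 1 := by
    have hzs := mem_sphere_iff_sq_add_sq.1 hz.1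
    nlinarith [sq_nonneg ‖z.snd‖]
  have hzc : c ≤ z.fst := hz.2
  refine ⟨⟨mul_pos ht0 (hc.trans_le hzc), mul_lt_one_of_nonneg_of_lt_one_left ht0.le ht1 hz1⟩, ?_⟩
  change ‖t • z.snd‖ ≤ ρ / c * (t * z.fst)
  calc ‖t • z.snd‖ = t * ‖z.snd‖ := norm_smul_of_nonneg ht0.le _
    _ ≤ t * ρ := by gcongr; exact norm_snd_le_of_mem_polarCap hc.le hρ h hz
    _ = ρ / c * (t * c) := by field_simp
    _ ≤ ρ / c * (t * z.fst) := by gcongr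

variable [InnerProductSpace ℝ F] [FiniteDimensional ℝ F]
  [MeasurableSpace F] [BorelSpace F]

lemma volume_circularCone {h k : ℝ} (hh : 0 ≤ h) (hk : 0 ≤ k) :
    volume (circularCone F h k) = ENNReal.ofReal (h ^ (Module.finrank ℝ F + 1) /
      (Module.finrank ℝ F + 1)) * volume (closedBall (0 : F) k) := by
  set n := Module.finrank ℝ F
  set C : Set (ℝ × F) := {p | p.1 ∈ Set.Ioo 0 h ∧ ‖p.2‖ ≤ k * p.1}
  have hC : MeasurableSet C := (measurable_fst measurableSet_Ioo).inter
    (measurableSet_le measurable_snd.norm (measurable_fst.const_mul k))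
  have hslice (t : ℝ) : volume (Prod.mk t ⁻¹' C) = (Set.Ioo 0 h).indicator
      (fun t => ENNReal.ofReal (t ^ n) * volume (closedBall (0 : F) k)) t := by
    by_cases ht : t ∈ Set.Ioo 0 h
    · rw [Set.indicator_of_mem ht, Measure.addHaar_closedBall' _ _ hk, ← mul_assoc,
        ← ENNReal.ofReal_mul (pow_nonneg ht.1.le _), ← mul_pow, mul_comm t,
        ← Measure.addHaar_closedBall' _ (0 : F) (mul_nonneg hk ht.1.le)]
      congr 1
      ext u
      exact ⟨fun hu => mem_closedBall_zero_iff.2 hu.2,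
        fun hu => ⟨ht, mem_closedBall_zero_iff.1 hu⟩⟩
    · rw [Set.indicator_of_notMem ht]
      exact measure_mono_null (fun u hu => ht hu.1) measure_empty
  calc volume (circularCone F h k) = volume C :=
        (WithLp.volume_preserving_ofLp ℝ F).measure_preimage hC.nullMeasurableSet
    _ = ∫⁻ t in Set.Ioo 0 h, ENNReal.ofReal (t ^ n) * volume (closedBall (0 : F) k) := by
        rw [Measure.volume_eq_prod, Measure.prod_apply hC, lintegral_congr hslice,
          lintegral_indicator measurableSet_Ioo]
    _ = _ := by
        rw [lintegral_mul_const' _ _ measure_closedBall_lt_top.ne, lintegral_Ioo_ofReal_pow hh]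

end ConeVolume

section SurfaceDensity

open scoped Pointwise

variable {F : Type*} [NormedAddCommGroup F] [InnerProductSpace ℝ F] [FiniteDimensional ℝ F]

lemma finrank_withLp_real_prod :
    Module.finrank ℝ (WithLp 2 (ℝ × F)) = Module.finrank ℝ F + 1 := by
  rw [(WithLp.linearEquiv 2 ℝ (ℝ × F)).finrank_eq, Module.finrank_prod, Module.finrank_self,
    add_comm]

variable [MeasurableSpace F] [BorelSpace F]

lemma volume_real_circularCone {h k : ℝ} (hh : 0 ≤ h) (hk : 0 ≤ k) :
    (Module.finrank ℝ F + 1) * volume.real (circularCone F h k)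
      = h ^ (Module.finrank ℝ F + 1) * volume.real (closedBall (0 : F) k) := by
  rw [measureReal_def, volume_circularCone hh hk, ENNReal.toReal_mul,
    ENNReal.toReal_ofReal (by positivity), measureReal_def, ← mul_assoc]
  congr 1
  field_simp

lemma volume_circularCone_ne_top {h k : ℝ} (hh : 0 ≤ h) (hk : 0 ≤ k) :
    volume (circularCone F h k) ≠ ∞ := by
  rw [volume_circularCone hh hk]
  exact ENNReal.mul_ne_top ENNReal.ofReal_ne_top measure_closedBall_lt_top.ne

lemma sphereSurface_real_polarCap (c : ℝ) :
    (sphereSurface (WithLp 2 (ℝ × F))).real (polarCap F c)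
      = (Module.finrank ℝ F + 1) * volume.real (Set.Ioo (0 : ℝ) 1 • polarCap F c) := by
  have hmeas : MeasurableSet (polarCap F c) := isClosed_sphere.measurableSet.inter
    (measurableSet_le measurable_const (WithLp.prod_continuous_ofLp 2 ℝ F).fst.measurable)
  rw [measureReal_def, sphereSurface_apply hmeas, Set.inter_eq_right.2 polarCap_subset_sphere,
    ENNReal.toReal_mul, ENNReal.toReal_natCast, finrank_withLp_real_prod, Nat.cast_add_one,
    measureReal_def]

lemma tendsto_sphereSurface_density :
    Tendsto (fun r : ℝ => (sphereSurface (WithLp 2 (ℝ × F))).real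
        (closedBall (WithLp.toLp 2 ((1 : ℝ), (0 : F))) r) / r ^ (Module.finrank ℝ F : ℝ)) (𝓝[>] 0)
      (𝓝 ((volume : Measure F).real (closedBall 0 1))) := by
  refine tendsto_density_pole (m₁ := 1) (m₂ := Module.finrank ℝ F)
    isSphereInvariant_sphereSurface.ae_mem fun c ρ hc hρ h => ?_
  have hk : 0 ≤ ρ / c := by positivity
  have hlower := circularCone_subset_Ioo_smul_polarCap (F := F) hc h
  have hupper := Ioo_smul_polarCap_subset_circularCone (F := F) hc hρ h
  have hball := Measure.addHaar_real_closedBall' volume (0 : F) hk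
  rw [sphereSurface_real_polarCap]
  constructor
  · calc c ^ 1 * (ρ ^ Module.finrank ℝ F * volume.real (closedBall (0 : F) 1))
        = (Module.finrank ℝ F + 1) * volume.real (circularCone F c (ρ / c)) := by
          rw [volume_real_circularCone hc.le hk, hball, div_pow, pow_one, pow_succ]
          field_simp
      _ ≤ _ := by
          gcongr
          exact measure_ne_top_of_subset hupper (volume_circularCone_ne_top zero_le_one hk)
  · calc (Module.finrank ℝ F + 1) * volume.real (Set.Ioo (0 : ℝ) 1 • polarCap F c)
        ≤ (Module.finrank ℝ F + 1) * volume.real (circularCone F 1 (ρ / c)) := by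
          gcongr
          exact volume_circularCone_ne_top zero_le_one hk
      _ = c⁻¹ ^ Module.finrank ℝ F *
            (ρ ^ Module.finrank ℝ F * volume.real (closedBall (0 : F) 1)) := by
          rw [volume_real_circularCone zero_le_one hk, hball, div_pow, one_pow, inv_pow]
          field_simp

end SurfaceDensity

section Constant

variable {F : Type*} [NormedAddCommGroup F] [InnerProductSpace ℝ F] [FiniteDimensional ℝ F]
  [MeasurableSpace F] [BorelSpace F]

lemma volume_real_unitBall [Nontrivial F] :
    volume.real (ball (0 : F) 1)
      = √π ^ Module.finrank ℝ F / Real.Gamma (Module.finrank ℝ F / 2 + 1) := by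
  rw [measureReal_def, InnerProductSpace.volume_ball, ENNReal.ofReal_one, one_pow, one_mul,
    ENNReal.toReal_ofReal]
  positivity

lemma volume_real_unitBall_div [Nontrivial F] :
    volume.real (closedBall (0 : F) 1)
        / ((Module.finrank ℝ F + 1) * volume.real (ball (0 : WithLp 2 (ℝ × F)) 1))
      = 1 / Module.finrank ℝ F * Real.Gamma ((Module.finrank ℝ F + 1) / 2)
        / (√π * Real.Gamma (Module.finrank ℝ F / 2)) := by
  have hd : (0 : ℝ) < Module.finrank ℝ F := Nat.cast_pos.2 Module.finrank_pos
  have hd1 : ((Module.finrank ℝ F + 1 : ℝ)) / 2 ≠ 0 := by positivity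
  have hGamma : Real.Gamma (Module.finrank ℝ F / 2) ≠ 0 :=
    (Real.Gamma_pos_of_pos (by positivity)).ne'
  have hGamma1 : Real.Gamma ((Module.finrank ℝ F + 1) / 2) ≠ 0 :=
    (Real.Gamma_pos_of_pos (by positivity)).ne'
  rw [Measure.addHaar_real_closedBall_eq_addHaar_real_ball, volume_real_unitBall,
    volume_real_unitBall, finrank_withLp_real_prod, Nat.cast_add_one,
    Real.Gamma_add_one (by positivity), Real.Gamma_add_one hd1, pow_succ]
  field_simp

lemma hausdorffMeasure_ball_div_sphere_eq_volume :
    (μH[Module.finrank ℝ F] : Measure F).real (closedBall 0 1)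
        / μH[Module.finrank ℝ F].real (sphere (0 : WithLp 2 (ℝ × F)) 1)
      = volume.real (closedBall (0 : F) 1)
        / ((Module.finrank ℝ F + 1) * volume.real (ball (0 : WithLp 2 (ℝ × F)) 1)) := by
  have h := (isSphereInvariant_hausdorffMeasure_restrict _).density_mul_measureReal_univ
    isSphereInvariant_sphereSurface pole_mem_sphere
      (tendsto_hausdorffMeasure_sphere_density (F := F)) tendsto_sphereSurface_density
  rw [sphereSurface_real_univ, finrank_withLp_real_prod, measureReal_restrict_apply_univ,
    Nat.cast_add_one] at h
  have hsphere : 0 < μH[Module.finrank ℝ F].real (sphere (0 : WithLp 2 (ℝ × F)) 1) :=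
    ENNReal.toReal_pos hausdorffMeasure_sphere_pos_s10.ne' hausdorffMeasure_sphere_lt_top_s10.ne
  have hball : 0 < volume.real (ball (0 : WithLp 2 (ℝ × F)) 1) :=
    ENNReal.toReal_pos (measure_ball_pos _ _ one_pos).ne' measure_ball_lt_top.ne
  rw [div_eq_div_iff hsphere.ne' (by positivity), h]

end Constant

section Sphere

lemma tendsto_minRieszEnergyOn_sphere_withLp {F : Type*} [NormedAddCommGroup F]
    [InnerProductSpace ℝ F] [FiniteDimensional ℝ F] [Nontrivial F] [MeasurableSpace F]
    [BorelSpace F] :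
    Tendsto (fun N : ℕ =>
        (minRieszEnergyOn (Module.finrank ℝ F) (sphere (0 : WithLp 2 (ℝ × F)) 1) N).toReal
          / ((N : ℝ) ^ 2 * Real.log N)) atTop
      (𝓝 ((μH[Module.finrank ℝ F] : Measure F).real (closedBall 0 1)
        / μH[Module.finrank ℝ F].real (sphere (0 : WithLp 2 (ℝ × F)) 1))) := by
  set μ := (μH[Module.finrank ℝ F] : Measure (WithLp 2 (ℝ × F))).restrict (sphere 0 1)
  have hμ : μ Set.univ = μH[Module.finrank ℝ F] (sphere (0 : WithLp 2 (ℝ × F)) 1) :=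
    Measure.restrict_apply_univ _
  have : NeZero μ := ⟨fun h => hausdorffMeasure_sphere_pos_s10.ne' (by rw [← hμ, h]; rfl)⟩
  have hμinv : IsSphereInvariant ((μ Set.univ)⁻¹ • μ) :=
    (isSphereInvariant_hausdorffMeasure_restrict _).smul _
  refine hμinv.tendsto_minRieszEnergyOn_sphere pole_mem_sphere
    (Nat.cast_pos.2 Module.finrank_pos) ?_
  refine (tendsto_hausdorffMeasure_sphere_density.div_const _).congr fun r => ?_
  rw [measureReal_ennreal_smul_apply, ENNReal.toReal_inv, hμ, div_right_comm, inv_mul_eq_div]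
  rfl

lemma minRieszEnergyOn_image {X Y : Type*} [PseudoEMetricSpace X] [PseudoEMetricSpace Y]
    {f : X → Y} (hf : Isometry f) (s : ℝ) (S : Set X) (N : ℕ) :
    minRieszEnergyOn s (f '' S) N = minRieszEnergyOn s S N := by
  refine le_antisymm (le_iInf fun x => ?_) (le_iInf fun y => ?_)
  · refine (iInf_le _ ⟨f ∘ x.1, fun k => Set.mem_image_of_mem f (x.2 k)⟩).trans_eq ?_
    simp only [rieszEnergy, Function.comp_apply, hf.edist_eq]
  · choose x hx hxy using y.2
    refine (iInf_le _ ⟨x, hx⟩).trans_eq ?_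
    simp only [rieszEnergy, ← hxy, hf.edist_eq]

variable {E F : Type*} [NormedAddCommGroup E] [InnerProductSpace ℝ E] [NormedAddCommGroup F]
  [InnerProductSpace ℝ F] [FiniteDimensional ℝ F]

lemma nonempty_linearIsometryEquiv_withLp_real_prod
    (h : Module.finrank ℝ E = Module.finrank ℝ F + 1) :
    Nonempty (WithLp 2 (ℝ × F) ≃ₗᵢ[ℝ] E) := by
  have := Module.finite_of_finrank_eq_succ h
  exact ⟨(stdOrthonormalBasis ℝ _).equiv (stdOrthonormalBasis ℝ E)
    (finCongr (finrank_withLp_real_prod.trans h.symm))⟩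

variable [MeasurableSpace E] [BorelSpace E] [MeasurableSpace F] [BorelSpace F]

lemma hausdorffMeasure_sphere_eq (f : WithLp 2 (ℝ × F) ≃ₗᵢ[ℝ] E) (s : ℝ) :
    (μH[s] : Measure E).real (sphere 0 1) = μH[s].real (sphere (0 : WithLp 2 (ℝ × F)) 1) := by
  rw [← map_zero f, ← f.image_sphere, measureReal_def,
    f.isometry.hausdorffMeasure_image (.inr f.surjective), measureReal_def]

theorem tendsto_minRieszEnergyOn_unitSphere [Nontrivial F]
    (h : Module.finrank ℝ E = Module.finrank ℝ F + 1) :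
    Tendsto (fun N : ℕ => (minRieszEnergyOn (Module.finrank ℝ F) (sphere (0 : E) 1) N).toReal
        / ((N : ℝ) ^ 2 * Real.log N)) atTop
      (𝓝 ((μH[Module.finrank ℝ F] : Measure F).real (closedBall 0 1)
        / (μH[Module.finrank ℝ F] : Measure E).real (sphere 0 1))) := by
  obtain ⟨f⟩ := nonempty_linearIsometryEquiv_withLp_real_prod h
  rw [hausdorffMeasure_sphere_eq f, ← map_zero f, ← f.image_sphere]
  simpa only [minRieszEnergyOn_image f.isometry] using tendsto_minRieszEnergyOn_sphere_withLp

theorem hausdorffMeasure_ball_div_sphere [Nontrivial F]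
    (h : Module.finrank ℝ E = Module.finrank ℝ F + 1) :
    (μH[Module.finrank ℝ F] : Measure F).real (closedBall 0 1)
        / (μH[Module.finrank ℝ F] : Measure E).real (sphere 0 1)
      = 1 / Module.finrank ℝ F * Real.Gamma ((Module.finrank ℝ F + 1) / 2)
        / (√π * Real.Gamma (Module.finrank ℝ F / 2)) := by
  obtain ⟨f⟩ := nonempty_linearIsometryEquiv_withLp_real_prod h
  rw [hausdorffMeasure_sphere_eq f, hausdorffMeasure_ball_div_sphere_eq_volume,
    volume_real_unitBall_div]

end Sphere

theorem minRieszEnergy_boundary_case_general (d : ℕ) (hd : d ≠ 0) :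
    Tendsto (fun N : ℕ =>
        (minRieszEnergy d d N).toReal / ((N : ℝ) ^ 2 * Real.log N)) atTop
      (𝓝 ((μH[(d : ℝ)] (closedBall (0 : EuclideanSpace ℝ (Fin d)) 1)).toReal /
          (μH[(d : ℝ)] (sphere (0 : EuclideanSpace ℝ (Fin (d + 1))) 1)).toReal))
    ∧ (μH[(d : ℝ)] (closedBall (0 : EuclideanSpace ℝ (Fin d)) 1)).toReal /
        (μH[(d : ℝ)] (sphere (0 : EuclideanSpace ℝ (Fin (d + 1))) 1)).toReal
      = (1 / d) * Real.Gamma (((d : ℝ) + 1) / 2) / (Real.sqrt π * Real.Gamma ((d : ℝ) / 2)) := by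
  have := NeZero.mk hd
  have hE : Module.finrank ℝ (EuclideanSpace ℝ (Fin (d + 1)))
      = Module.finrank ℝ (EuclideanSpace ℝ (Fin d)) + 1 := by
    simp only [finrank_euclideanSpace_fin]
  have hlim := tendsto_minRieszEnergyOn_unitSphere hE
  have hconst := hausdorffMeasure_ball_div_sphere hE
  rw [finrank_euclideanSpace_fin] at hlim hconst
  exact ⟨hlim, hconst⟩

/-- Boundary case `s = d`: for `d ≥ 2`, `E_d(S^d; N)/(N² log N)` converges to
`H_d(B^d)/H_d(S^d) = (1/d) Γ((d+1)/2)/(√π Γ(d/2))` as `N → ∞`. -/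
theorem minRieszEnergy_boundary_case (d : ℕ) (hd : 2 ≤ d) :
    Tendsto (fun N : ℕ =>
        (minRieszEnergy d d N).toReal / ((N : ℝ) ^ 2 * Real.log N)) atTop
      (𝓝 ((μH[(d : ℝ)] (closedBall (0 : EuclideanSpace ℝ (Fin d)) 1)).toReal /
          (μH[(d : ℝ)] (sphere (0 : EuclideanSpace ℝ (Fin (d + 1))) 1)).toReal))
    ∧ (μH[(d : ℝ)] (closedBall (0 : EuclideanSpace ℝ (Fin d)) 1)).toReal /
        (μH[(d : ℝ)] (sphere (0 : EuclideanSpace ℝ (Fin (d + 1))) 1)).toReal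
      = (1 / d) * Real.Gamma (((d : ℝ) + 1) / 2) / (Real.sqrt π * Real.Gamma ((d : ℝ) / 2)) :=
  minRieszEnergy_boundary_case_general d (by lia)
end
end
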